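/- ℓ is in the limit-point case at a if and only if W(f,g)(a) = 0 for all (f, f^[1]), (g, g^[1]) ∈ D_ℓ². Furthermore, ℓ is in the limit-circle case at a if and only if there is (f, f^[1]) ∈ D_ℓ² such that W(f, f*)(a) = 0 and W(f, g)(a) ≠ 0 for some (g, g^[1]) ∈ D_ℓ², where f* denotes the complex-conjugate pair (conj f, conj f^[1]). The analogous statements hold at the endpoint b. -/

import Mathlib

open MeasureTheory Set Filter
open scoped ENNReal NNReal Classical

/-- Forward shift of a time scale. -/
noncomputable def tsSigma (T : Set ℝ) (t : ℝ) : ℝ :=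
  if ({s | s ∈ T ∧ t < s}).Nonempty then sInf {s | s ∈ T ∧ t < s} else sSup T

/-- Backward shift of a time scale. -/
noncomputable def tsRho (T : Set ℝ) (t : ℝ) : ℝ :=
  if ({s | s ∈ T ∧ s < t}).Nonempty then sSup {s | s ∈ T ∧ s < t} else sInf T

/-- `𝕋_κ` : the time scale with the left endpoint removed if it is finite and right-scattered. -/
noncomputable def tsKappa (T : Set ℝ) : Set ℝ :=
  if BddBelow T ∧ sInf T < tsSigma T (sInf T) then T \ {sInf T} else T

/-- Extension `p̄` of a function on `𝕋_κ` to all of `ℝ`. -/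
noncomputable def extK (T : Set ℝ) (p : ℝ → ℂ) (t : ℝ) : ℂ :=
  if t ∈ tsKappa T then p t else p (tsSigma (tsKappa T) t)

/-- Coercion of a real-valued coefficient to a complex-valued one. -/
def cR (f : ℝ → ℝ) : ℝ → ℂ := fun t => (f t : ℂ)

/-- `(u, u^[1])` is an integrated pair with density `h` against the measure `μ = dσ_κ`. -/
def IsPair (T : Set ℝ) (μ : Measure ℝ) (p : ℝ → ℂ) (u u1 h : ℝ → ℂ) : Prop :=
  ∀ c x : ℝ, c ≤ x →
    u x = u c + ∫ t in c..x, u1 t / extK T p t ∧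
    u1 x = u1 c + ∫ t in Set.Ioc c x, h t ∂μ

/-- `(u, u^[1])` is a solution pair of `(ℓ - z) u = g`. -/
def IsSLSol (T : Set ℝ) (μ : Measure ℝ) (p r q : ℝ → ℂ) (z : ℂ) (g : ℝ → ℂ)
    (u u1 : ℝ → ℂ) : Prop :=
  IsPair T μ p u u1 (fun t => (q t - z * r t) * u t - r t * g t)

/-- Wronskian of two pairs. -/
def Wr (u u1 v v1 : ℝ → ℂ) (x : ℝ) : ℂ := u x * v1 x - u1 x * v x

/-- The integrand `|u|² r` as an `ℝ≥0∞`-valued function. -/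
noncomputable def sqWeight (r : ℝ → ℝ) (u : ℝ → ℂ) (t : ℝ) : ℝ≥0∞ :=
  ((‖u t‖₊ : ℝ≥0∞)) ^ 2 * ENNReal.ofReal (r t)

/-- `u` lies in `L²` near the left endpoint `a`. -/
def L2NearLeft (T : Set ℝ) (μ : Measure ℝ) (r : ℝ → ℝ) (u : ℝ → ℂ) : Prop :=
  ∀ c ∈ tsKappa T, ∫⁻ t in {t | (∃ s ∈ T, s < t) ∧ t ≤ c} ∩ tsKappa T, sqWeight r u t ∂μ < ∞

/-- `u` lies in `L²` near the right endpoint `b`. -/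
def L2NearRight (T : Set ℝ) (μ : Measure ℝ) (r : ℝ → ℝ) (u : ℝ → ℂ) : Prop :=
  ∀ c ∈ tsKappa T, ∫⁻ t in {t | c ≤ t ∧ ∃ s ∈ T, t < s} ∩ tsKappa T, sqWeight r u t ∂μ < ∞

/-- `ℓ` is in the limit-circle case at the left endpoint. -/
def LimitCircleLeft (T : Set ℝ) (μ : Measure ℝ) (p r q : ℝ → ℝ) : Prop :=
  ∀ z : ℂ, ∀ u u1 : ℝ → ℂ, IsSLSol T μ (cR p) (cR r) (cR q) z 0 u u1 → L2NearLeft T μ r u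

/-- `ℓ` is in the limit-point case at the left endpoint. -/
def LimitPointLeft (T : Set ℝ) (μ : Measure ℝ) (p r q : ℝ → ℝ) : Prop :=
  ∀ z : ℂ, ∃ u u1 : ℝ → ℂ, IsSLSol T μ (cR p) (cR r) (cR q) z 0 u u1 ∧ ¬ L2NearLeft T μ r u

/-- `ℓ` is in the limit-circle case at the right endpoint. -/
def LimitCircleRight (T : Set ℝ) (μ : Measure ℝ) (p r q : ℝ → ℝ) : Prop :=
  ∀ z : ℂ, ∀ u u1 : ℝ → ℂ, IsSLSol T μ (cR p) (cR r) (cR q) z 0 u u1 → L2NearRight T μ r u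

/-- `ℓ` is in the limit-point case at the right endpoint. -/
def LimitPointRight (T : Set ℝ) (μ : Measure ℝ) (p r q : ℝ → ℝ) : Prop :=
  ∀ z : ℂ, ∃ u u1 : ℝ → ℂ, IsSLSol T μ (cR p) (cR r) (cR q) z 0 u u1 ∧ ¬ L2NearRight T μ r u

/-- The action `ℓ u = (-h + q u)/r` of the differential expression on a pair with density `h`. -/
noncomputable def ellApply (r q : ℝ → ℝ) (h u : ℝ → ℂ) (t : ℝ) : ℂ :=
  (-h t + (q t : ℂ) * u t) / (r t : ℂ)

/-- Membership in `L²(𝕋_κ; r dσ_κ)`. -/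
def MemL2T (T : Set ℝ) (μ : Measure ℝ) (r : ℝ → ℝ) (u : ℝ → ℂ) : Prop :=
  ∫⁻ t in tsKappa T, sqWeight r u t ∂μ < ∞

/-- The pair `(u, u^[1])` with density `h` belongs to `D_ℓ²`. -/
def MemD2 (T : Set ℝ) (μ : Measure ℝ) (p r q : ℝ → ℝ) (u u1 h : ℝ → ℂ) : Prop :=
  LocallyIntegrable h μ ∧ IsPair T μ (cR p) u u1 h ∧ MemL2T T μ r u ∧
    MemL2T T μ r (ellApply r q h u)

/-- The filter `x ↓ a`, `x ∈ 𝕋`. -/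
noncomputable def leftLimFilter (T : Set ℝ) : Filter ℝ :=
  if BddBelow T then nhdsWithin (sInf T) T else Filter.atBot ⊓ Filter.principal T

/-- The filter `x ↑ b`, `x ∈ 𝕋`. -/
noncomputable def rightLimFilter (T : Set ℝ) : Filter ℝ :=
  if BddAbove T then nhdsWithin (sSup T) T else Filter.atTop ⊓ Filter.principal T

/-- The measure `r dσ_κ` on `𝕋_κ`, giving the Hilbert space `L²(𝕋_κ; r dσ_κ)`. -/
noncomputable def wM (T : Set ℝ) (μ : Measure ℝ) (r : ℝ → ℝ) : Measure ℝ :=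
  (μ.restrict (tsKappa T)).withDensity fun t => ENNReal.ofReal (r t)

/-!
By Lagrange's identity the Wronskian of two elements of `D_ℓ²` is an indefinite integral of an
integrable function, so it has a limit at each endpoint. If `W(f, g)` tends to some `w ≠ 0`, then
for every solution `u` of `(ℓ - z) u = 0` the identity `u W(f, g) = f W(u, g) - g W(u, f)`, together
with the Cauchy–Schwarz inequality applied to the Wronskians on the right, bounds the `L²` norm of
`u` over an interval near the endpoint by a constant plus a small multiple of itself. This is the
limit-circle case for all `z` at once. Conversely, if for some `z` every solution is `L²` near the
endpoint, take two solutions whose Wronskian is identically `1` and use Naimark's patching lemma to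
cut them off away from that endpoint: this gives elements of `D_ℓ²` with boundary Wronskian `1`. At
`z = 0` the first of them can be taken real near the endpoint, so that `W(f, f*)` vanishes there.
-/

open scoped Topology Interval

section IntegrationByParts

section Basic

variable {E : Type*} [NormedAddCommGroup E] {μ : Measure ℝ} {f : ℝ → E}

lemma intervalIntegrable_of_locallyIntegrable (hf : LocallyIntegrable f μ) (a b : ℝ) :
    IntervalIntegrable f μ a b :=
  (hf.integrableOn_isCompact isCompact_uIcc).intervalIntegrable

lemma locallyIntegrable_of_integrableOn_Ioc
    (hf : ∀ a b, a ≤ b → IntegrableOn f (Ioc a b) μ) : LocallyIntegrable f μ := fun x ↦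
  ⟨Ioc (x - 1) (x + 1), Ioc_mem_nhds (by linarith) (by linarith), hf _ _ (by linarith)⟩

lemma locallyIntegrable_conj {f : ℝ → ℂ} (hf : LocallyIntegrable f μ) :
    LocallyIntegrable (fun t ↦ starRingEnd ℂ (f t)) μ :=
  hf.mono (Complex.continuous_conj.comp_aestronglyMeasurable hf.aestronglyMeasurable)
    (ae_of_all _ fun t ↦ by simp)

end Basic

section Triangle

variable {𝕜 : Type*} [RCLike 𝕜] {ν μ : Measure ℝ} {φ h : ℝ → 𝕜} {c x : ℝ}

/-- The kernel `φ s * h t` supported on the triangle `s < t`, whose two iterated integrals give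
integration by parts. -/
noncomputable def triangleKernel (φ h : ℝ → 𝕜) : ℝ × ℝ → 𝕜 :=
  {z : ℝ × ℝ | z.1 < z.2}.indicator fun z ↦ φ z.1 * h z.2

lemma integrable_triangleKernel (hφ : IntegrableOn φ (Ioc c x) ν)
    (hh : IntegrableOn h (Ioc c x) μ) :
    Integrable (triangleKernel φ h) ((ν.restrict (Ioc c x)).prod (μ.restrict (Ioc c x))) :=
  (Integrable.mul_prod hφ hh).indicator (measurableSet_lt measurable_fst measurable_snd)

lemma setIntegral_triangleKernel_right {s : ℝ} (hs : s ∈ Ioc c x) :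
    ∫ t in Ioc c x, triangleKernel φ h (s, t) ∂μ = φ s * ∫ t in Ioc s x, h t ∂μ := by
  have hkernel : (fun t ↦ triangleKernel φ h (s, t)) = (Ioi s).indicator fun t ↦ φ s * h t := by
    ext t; simp [triangleKernel, indicator]
  rw [hkernel, setIntegral_indicator measurableSet_Ioi, Ioc_inter_Ioi, sup_eq_right.2 hs.1.le,
    integral_const_mul]

lemma setIntegral_triangleKernel_left {t : ℝ} (ht : t ∈ Ioc c x) :
    ∫ s in Ioc c x, triangleKernel φ h (s, t) ∂ν = (∫ s in Ioo c t, φ s ∂ν) * h t := by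
  have hkernel : (fun s ↦ triangleKernel φ h (s, t)) = (Iio t).indicator fun s ↦ φ s * h t := by
    ext s; simp [triangleKernel, indicator]
  have hinter : Ioc c x ∩ Iio t = Ioo c t := by
    ext s; simp only [mem_inter_iff, mem_Ioc, mem_Iio, mem_Ioo]
    exact ⟨fun hs ↦ ⟨hs.1.1, hs.2⟩, fun hs ↦ ⟨⟨hs.1, hs.2.le.trans ht.2⟩, hs.2⟩⟩
  rw [hkernel, setIntegral_indicator measurableSet_Iio, hinter, integral_mul_const]

lemma integrableOn_mul_setIntegral_Ioc [SFinite μ] (hφ : IntegrableOn φ (Ioc c x) ν)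
    (hh : IntegrableOn h (Ioc c x) μ) :
    IntegrableOn (fun s ↦ φ s * ∫ t in Ioc s x, h t ∂μ) (Ioc c x) ν :=
  (integrable_triangleKernel hφ hh).integral_prod_left.congr <|
    (ae_restrict_mem measurableSet_Ioc).mono fun _ ↦ setIntegral_triangleKernel_right

lemma setIntegral_mul_setIntegral_swap [SFinite μ] [SFinite ν] (hφ : IntegrableOn φ (Ioc c x) ν)
    (hh : IntegrableOn h (Ioc c x) μ) :
    ∫ s in Ioc c x, φ s * ∫ t in Ioc s x, h t ∂μ ∂ν =
      ∫ t in Ioc c x, (∫ s in Ioo c t, φ s ∂ν) * h t ∂μ := by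
  have hswap := integral_integral_swap (f := fun s t ↦ triangleKernel φ h (s, t))
    (integrable_triangleKernel hφ hh)
  rwa [setIntegral_congr_fun measurableSet_Ioc fun _ ↦ setIntegral_triangleKernel_right,
    setIntegral_congr_fun measurableSet_Ioc fun _ ↦ setIntegral_triangleKernel_left] at hswap

end Triangle

section Primitive

variable {E : Type*} [NormedAddCommGroup E] [NormedSpace ℝ E] {μ ν : Measure ℝ}

/-- `F` is an indefinite integral of `f` against `μ`. With `μ` allowed to have atoms, `F` is
right-continuous, since `∫ t in c..x` integrates over `(c, x]`. -/
def IsPrimitive (μ : Measure ℝ) (F f : ℝ → E) : Prop :=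
  ∀ c x, F x = F c + ∫ t in c..x, f t ∂μ

namespace IsPrimitive

variable {F f G g : ℝ → E}

lemma of_le (hF : ∀ c x, c ≤ x → F x = F c + ∫ t in c..x, f t ∂μ) : IsPrimitive μ F f := by
  intro c x
  rcases le_total c x with h | h
  · exact hF c x h
  · rw [hF x c h, intervalIntegral.integral_symm]; abel

lemma add (hF : IsPrimitive μ F f) (hf : LocallyIntegrable f μ) (hG : IsPrimitive μ G g)
    (hg : LocallyIntegrable g μ) : IsPrimitive μ (fun t ↦ F t + G t) fun t ↦ f t + g t := by
  intro c x
  simp only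
  rw [hF c x, hG c x, intervalIntegral.integral_add
    (intervalIntegrable_of_locallyIntegrable hf c x)
    (intervalIntegrable_of_locallyIntegrable hg c x)]
  abel

lemma const_add (hF : IsPrimitive μ F f) (a : E) : IsPrimitive μ (fun t ↦ a + F t) f := by
  intro c x
  simp only
  rw [hF c x, add_assoc]

lemma const_mul {𝕜 : Type*} [RCLike 𝕜] {F f : ℝ → 𝕜} (hF : IsPrimitive μ F f) (a : 𝕜) :
    IsPrimitive μ (fun t ↦ a * F t) fun t ↦ a * f t := by
  intro c x
  simp only
  rw [hF c x, intervalIntegral.integral_const_mul, mul_add]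

lemma conj {F f : ℝ → ℂ} (hF : IsPrimitive μ F f) :
    IsPrimitive μ (fun t ↦ starRingEnd ℂ (F t)) fun t ↦ starRingEnd ℂ (f t) := by
  intro c x
  simp only
  rw [hF c x, map_add, intervalIntegral.intervalIntegral_conj]

lemma continuous [NullSingletonClass μ] (hF : IsPrimitive μ F f) (hf : LocallyIntegrable f μ) :
    Continuous F := by
  rw [funext (hF 0)]
  exact continuous_const.add (intervalIntegral.continuous_primitive
    (intervalIntegrable_of_locallyIntegrable hf) 0)

/-- The Bochner integral of a non-integrable function is `0`, so a primitive of a density with a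
non-integrable singularity at `t₀` is constant apart from its value at `t₀`. -/
lemma exists_eq_const_of_not_locallyIntegrable (hF : IsPrimitive μ F f)
    (hf : ¬LocallyIntegrable f μ) : ∃ t₀ k, ∀ x, x ≠ t₀ → F x = k := by
  simp only [LocallyIntegrable, not_forall] at hf
  obtain ⟨t₀, ht₀⟩ := hf
  have hjump (c x : ℝ) (hc : c < t₀) (hx : t₀ < x) : F x = F c := by
    rw [hF c x, intervalIntegral.integral_of_le (hc.trans hx).le,
      integral_undef fun hint ↦ ht₀ ⟨_, Ioc_mem_nhds hc hx, hint⟩, add_zero]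
  refine ⟨t₀, F (t₀ - 1), fun x hx ↦ ?_⟩
  rcases lt_or_gt_of_ne hx with h | h
  · rw [← hjump x (t₀ + 1) h (by linarith), hjump (t₀ - 1) (t₀ + 1) (by linarith) (by linarith)]
  · exact hjump _ _ (by linarith) h

variable {𝕜 : Type*} [RCLike 𝕜] [IsLocallyFiniteMeasure μ] {u v φ h : ℝ → 𝕜}

lemma locallyIntegrable_mul (hv : IsPrimitive μ v h) (hh : LocallyIntegrable h μ)
    (hφ : LocallyIntegrable φ ν) : LocallyIntegrable (fun t ↦ φ t * v t) ν := by
  refine locallyIntegrable_of_integrableOn_Ioc fun a b _ ↦ ?_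
  have hφ_ab := (intervalIntegrable_of_locallyIntegrable hφ a b).1
  have hh_ab := (intervalIntegrable_of_locallyIntegrable hh a b).1
  refine IntegrableOn.congr_fun ((hφ_ab.const_mul (v b)).sub
    (integrableOn_mul_setIntegral_Ioc hφ_ab hh_ab)) ?_ measurableSet_Ioc
  intro t ht
  simp only [Pi.sub_apply]
  rw [hv t b, intervalIntegral.integral_of_le ht.2]
  ring

variable [IsLocallyFiniteMeasure ν]

lemma mul_sub_mul_of_le [NullSingletonClass ν] (hu : IsPrimitive ν u φ) (hφ : LocallyIntegrable φ ν)
    (hv : IsPrimitive μ v h) (hh : LocallyIntegrable h μ) {c x : ℝ} (hcx : c ≤ x) :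
    u x * v x - u c * v c = (∫ t in c..x, u t * h t ∂μ) + ∫ t in c..x, φ t * v t ∂ν := by
  have hφ_cx := intervalIntegrable_of_locallyIntegrable hφ c x
  have hh_cx := intervalIntegrable_of_locallyIntegrable hh c x
  have hφv := intervalIntegrable_of_locallyIntegrable (hv.locallyIntegrable_mul hh hφ) c x
  have huh := intervalIntegrable_of_locallyIntegrable
    (hh.continuous_mul (hu.continuous hφ)) c x
  have hleft : ∫ s in Ioc c x, φ s * ∫ t in Ioc s x, h t ∂μ ∂ν =
      v x * (u x - u c) - ∫ t in c..x, φ t * v t ∂ν := by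
    rw [hu c x, add_sub_cancel_left, ← intervalIntegral.integral_const_mul,
      ← intervalIntegral.integral_sub (hφ_cx.const_mul _) hφv, intervalIntegral.integral_of_le hcx]
    refine setIntegral_congr_fun measurableSet_Ioc fun t ht ↦ ?_
    rw [hv t x, intervalIntegral.integral_of_le ht.2]
    ring
  have hright : ∫ t in Ioc c x, (∫ s in Ioo c t, φ s ∂ν) * h t ∂μ =
      (∫ t in c..x, u t * h t ∂μ) - u c * (v x - v c) := by
    rw [hv c x, add_sub_cancel_left, ← intervalIntegral.integral_const_mul,
      ← intervalIntegral.integral_sub huh (hh_cx.const_mul _), intervalIntegral.integral_of_le hcx]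
    refine setIntegral_congr_fun measurableSet_Ioc fun t ht ↦ ?_
    rw [hu c t, intervalIntegral.integral_of_le ht.1.le, integral_Ioc_eq_integral_Ioo]
    ring
  have hswap := setIntegral_mul_setIntegral_swap hφ_cx.1 hh_cx.1
  rw [hleft, hright] at hswap
  linear_combination hswap

theorem mul_sub_mul [NullSingletonClass ν] (hu : IsPrimitive ν u φ) (hφ : LocallyIntegrable φ ν)
    (hv : IsPrimitive μ v h) (hh : LocallyIntegrable h μ) (c x : ℝ) :
    u x * v x - u c * v c = (∫ t in c..x, u t * h t ∂μ) + ∫ t in c..x, φ t * v t ∂ν := by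
  rcases le_total c x with hcx | hxc
  · exact hu.mul_sub_mul_of_le hφ hv hh hcx
  · rw [intervalIntegral.integral_symm x c, intervalIntegral.integral_symm x c]
    linear_combination -hu.mul_sub_mul_of_le hφ hv hh hxc

end IsPrimitive

end Primitive

end IntegrationByParts

section Volterra

section PowerFormula

variable {𝕜 : Type*} [RCLike 𝕜] {μ : Measure ℝ} [IsLocallyFiniteMeasure μ]
  [NullSingletonClass μ] {F f : ℝ → 𝕜}

lemma IsPrimitive.pow (hF : IsPrimitive μ F f) (hf : LocallyIntegrable f μ) (n : ℕ) :
    IsPrimitive μ (fun x ↦ F x ^ (n + 1)) fun t ↦ (n + 1) * (f t * F t ^ n) := by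
  induction n with
  | zero => simpa using hF
  | succ n ih =>
    have hdensity : LocallyIntegrable (fun t ↦ ((n : 𝕜) + 1) * (f t * F t ^ n)) μ :=
      (hf.mul_continuous ((hF.continuous hf).pow n)).smul ((n : 𝕜) + 1)
    intro c x
    have hparts := hF.mul_sub_mul hf ih hdensity c x
    have hfactor : ∫ t in c..x, F t * ((n + 1) * (f t * F t ^ n)) ∂μ =
        (n + 1) * ∫ t in c..x, f t * F t ^ (n + 1) ∂μ := by
      rw [← intervalIntegral.integral_const_mul]
      exact intervalIntegral.integral_congr fun t _ ↦ by ring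
    rw [hfactor] at hparts
    rw [intervalIntegral.integral_const_mul]
    push_cast
    linear_combination hparts

end PowerFormula

section MassBetween

variable {E : Type*} [NormedAddCommGroup E] {μ : Measure ℝ} {f : ℝ → E} {c t x : ℝ}

lemma uIoc_subset_uIoc_of_mem_uIcc (ht : t ∈ uIcc c x) : uIoc c t ⊆ uIoc c x := by
  rw [mem_uIcc] at ht
  intro s hs
  rw [mem_uIoc] at hs ⊢
  grind

lemma isPrimitive_integral {F : Type*} [NormedAddCommGroup F] [NormedSpace ℝ F] {f : ℝ → F}
    (hf : LocallyIntegrable f μ) (c : ℝ) : IsPrimitive μ (fun x ↦ ∫ t in c..x, f t ∂μ) f :=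
  fun a x ↦ (intervalIntegral.integral_add_adjacent_intervals
    (intervalIntegrable_of_locallyIntegrable hf c a)
    (intervalIntegrable_of_locallyIntegrable hf a x)).symm

/-- The unsigned integral of `‖f‖` over the points between `c` and `x`, in either order. -/
noncomputable def massBetween (μ : Measure ℝ) (f : ℝ → E) (c x : ℝ) : ℝ :=
  ∫ s in uIoc c x, ‖f s‖ ∂μ

lemma massBetween_nonneg : 0 ≤ massBetween μ f c x :=
  integral_nonneg fun _ ↦ norm_nonneg _

lemma massBetween_eq_abs : massBetween μ f c x = |∫ s in c..x, ‖f s‖ ∂μ| := by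
  rw [intervalIntegral.abs_integral_eq_abs_integral_uIoc, ← massBetween,
    abs_of_nonneg massBetween_nonneg]

lemma integrableOn_uIoc_of_locallyIntegrable (hf : LocallyIntegrable f μ) (c x : ℝ) :
    IntegrableOn f (uIoc c x) μ :=
  intervalIntegrable_iff.1 (intervalIntegrable_of_locallyIntegrable hf c x)

lemma massBetween_mono (hf : LocallyIntegrable f μ) (ht : t ∈ uIcc c x) :
    massBetween μ f c t ≤ massBetween μ f c x :=
  setIntegral_mono_set (integrableOn_uIoc_of_locallyIntegrable hf c x).norm
    (ae_of_all _ fun _ ↦ norm_nonneg _) (uIoc_subset_uIoc_of_mem_uIcc ht).eventuallyLE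

lemma locallyIntegrable_norm (hf : LocallyIntegrable f μ) :
    LocallyIntegrable (fun t ↦ ‖f t‖) μ := fun x ↦ (hf x).norm

lemma continuous_massBetween [NullSingletonClass μ] (hf : LocallyIntegrable f μ) (c : ℝ) :
    Continuous (massBetween μ f c) := by
  rw [show massBetween μ f c = fun x ↦ |∫ s in c..x, ‖f s‖ ∂μ| from
    funext fun x ↦ massBetween_eq_abs]
  exact ((isPrimitive_integral (locallyIntegrable_norm hf) c).continuous
    (locallyIntegrable_norm hf)).abs

lemma norm_integral_mul_le {f w : ℝ → ℂ} {B : ℝ} (hf : LocallyIntegrable f μ)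
    (hw : ∀ s ∈ uIoc c x, ‖w s‖ ≤ B) :
    ‖∫ s in c..x, f s * w s ∂μ‖ ≤ massBetween μ f c x * B := by
  rw [intervalIntegral.norm_integral_eq_norm_integral_uIoc, massBetween, ← integral_mul_const]
  refine norm_integral_le_of_norm_le
    ((integrableOn_uIoc_of_locallyIntegrable hf c x).norm.mul_const B) ?_
  filter_upwards [ae_restrict_mem measurableSet_uIoc] with s hs
  rw [norm_mul]
  exact mul_le_mul_of_nonneg_left (hw s hs) (norm_nonneg _)

lemma integral_norm_mul_massBetween_pow [IsLocallyFiniteMeasure μ] [NullSingletonClass μ]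
    (hf : LocallyIntegrable f μ) (c : ℝ) (n : ℕ) (x : ℝ) :
    ∫ t in uIoc c x, ‖f t‖ * massBetween μ f c t ^ n ∂μ =
      massBetween μ f c x ^ (n + 1) / (n + 1) := by
  have hnorm := locallyIntegrable_norm hf
  have hpow := (isPrimitive_integral hnorm c).pow hnorm n c x
  simp only [intervalIntegral.integral_same, zero_pow n.succ_ne_zero, zero_add,
    intervalIntegral.integral_const_mul] at hpow
  rw [eq_div_iff (by positivity)]
  simp only [massBetween]
  rcases le_total c x with hcx | hxc
  · simp only [uIoc_of_le hcx, ← intervalIntegral.integral_of_le hcx, hpow]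
    rw [mul_comm, intervalIntegral.integral_of_le hcx, intervalIntegral.integral_of_le hcx]
    congr 1
    refine setIntegral_congr_fun measurableSet_Ioc fun t ht ↦ ?_
    simp only [uIoc_of_le ht.1.le, intervalIntegral.integral_of_le ht.1.le]
  · have hsign : (-1 : ℝ) ^ n * (-1) ^ n = 1 := by rw [← mul_pow]; norm_num
    have hint : ∫ t in Ioc x c, ‖f t‖ * (∫ s in c..t, ‖f s‖ ∂μ) ^ n ∂μ =
        (-1) ^ n * ∫ t in uIoc c x, ‖f t‖ * (∫ s in uIoc c t, ‖f s‖ ∂μ) ^ n ∂μ := by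
      rw [uIoc_of_ge hxc, ← integral_const_mul]
      refine setIntegral_congr_fun measurableSet_Ioc fun t ht ↦ ?_
      simp only [uIoc_of_ge ht.2, intervalIntegral.integral_of_ge ht.2, neg_pow (∫ _ in _, _ ∂μ)]
      ring
    rw [intervalIntegral.integral_of_ge hxc, intervalIntegral.integral_of_ge hxc, hint, neg_pow,
      pow_succ (-1)] at hpow
    rw [uIoc_of_ge hxc] at hpow ⊢
    linear_combination (-1 : ℝ) ^ n * hpow -
      ((n + 1) * (∫ t in Ioc x c, ‖f t‖ * (∫ s in uIoc c t, ‖f s‖ ∂μ) ^ n ∂μ)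
        - (∫ t in Ioc x c, ‖f t‖ ∂μ) ^ (n + 1)) * hsign

end MassBetween

variable {μ : Measure ℝ} {Φ Q : ℝ → ℂ} {c : ℝ}

lemma hasSum_integral_mul {f W : ℝ → ℂ} {w : ℕ → ℝ → ℂ} {b : ℕ → ℝ} {x : ℝ}
    (hf : LocallyIntegrable f μ)
    (hmeas : ∀ n, AEStronglyMeasurable (fun s ↦ f s * w n s) (μ.restrict (uIoc c x)))
    (hb : Summable b) (hbound : ∀ n, ∀ s ∈ uIoc c x, ‖w n s‖ ≤ b n)
    (hsum : ∀ s ∈ uIoc c x, HasSum (fun n ↦ w n s) (W s)) :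
    HasSum (fun n ↦ ∫ s in c..x, f s * w n s ∂μ) (∫ s in c..x, f s * W s ∂μ) := by
  refine intervalIntegral.hasSum_integral_of_dominated_convergence (fun n s ↦ ‖f s‖ * b n)
    hmeas (fun n ↦ ae_of_all _ fun s hs ↦ ?_) (ae_of_all _ fun s _ ↦ hb.mul_left _) ?_
    (ae_of_all _ fun s hs ↦ (hsum s hs).mul_left _)
  · rw [norm_mul]
    exact mul_le_mul_of_nonneg_left (hbound n s hs) (norm_nonneg _)
  · simp_rw [tsum_mul_left]
    exact (intervalIntegrable_of_locallyIntegrable hf c x).norm.mul_const _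

lemma continuous_tsum_of_summable_bound_uIcc {w : ℕ → ℝ → ℂ} (hw : ∀ n, Continuous (w n))
    (hbound : ∀ x, ∃ b : ℕ → ℝ, Summable b ∧ ∀ n, ∀ t ∈ uIcc c x, ‖w n t‖ ≤ b n) :
    Continuous fun x ↦ ∑' n, w n x := by
  have hcont (x : ℝ) : ContinuousOn (fun x ↦ ∑' n, w n x) (uIcc c x) := by
    obtain ⟨b, hb, hwb⟩ := hbound x
    exact continuousOn_tsum (fun n ↦ (hw n).continuousOn) hb hwb
  refine continuous_iff_continuousAt.2 fun x ↦ ?_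
  refine ((hcont (x + 1)).union_of_isClosed (hcont (x - 1)) isClosed_Icc isClosed_Icc).continuousAt
    ?_
  filter_upwards [Icc_mem_nhds (show x - 1 < x by linarith) (show x < x + 1 by linarith)] with y hy
  rcases le_total c y with h | h
  · exact Or.inl (mem_uIcc.2 (Or.inl ⟨h, hy.2⟩))
  · exact Or.inr (mem_uIcc.2 (Or.inr ⟨hy.1, h⟩))

/-- The Volterra operator whose fixed points vanishing at `c`, together with their quasi-derivative,
solve `u^[1] = ∫ Q u dμ`, `u = ∫ Φ u^[1]`. -/
noncomputable def volterra (μ : Measure ℝ) (Φ Q : ℝ → ℂ) (c : ℝ) (w : ℝ → ℂ) (x : ℝ) : ℂ :=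
  ∫ t in c..x, Φ t * ∫ s in c..t, Q s * w s ∂μ

lemma norm_volterra_le (hΦ : LocallyIntegrable Φ volume) (hQ : LocallyIntegrable Q μ)
    {w : ℝ → ℂ} {y M : ℝ} (hM : 0 ≤ M) {n : ℕ}
    (hw : ∀ t ∈ uIcc c y, ‖w t‖ ≤ M * massBetween volume Φ c t ^ n / n.factorial) :
    ∀ x ∈ uIcc c y, ‖volterra μ Φ Q c w x‖ ≤
      M * massBetween μ Q c y * massBetween volume Φ c x ^ (n + 1) / (n + 1).factorial := by
  intro x hx
  set P := massBetween volume Φ c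
  set C := massBetween μ Q c y
  have hP (t : ℝ) : 0 ≤ P t := massBetween_nonneg
  have hinner (t : ℝ) (ht : t ∈ uIcc c y) :
      ‖∫ s in c..t, Q s * w s ∂μ‖ ≤ C * (M * P t ^ n / n.factorial) := by
    refine (norm_integral_mul_le (B := M * P t ^ n / n.factorial) hQ fun s hs ↦ ?_).trans ?_
    · refine (hw s (uIoc_subset_uIcc (uIoc_subset_uIoc_of_mem_uIcc ht hs))).trans ?_
      gcongr
      · exact hP s
      · exact massBetween_mono hΦ (uIoc_subset_uIcc hs)
    · have := hP t
      gcongr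
      exact massBetween_mono hQ ht
  have hintegrable : IntegrableOn (fun t ↦ ‖Φ t‖ * P t ^ n) (uIoc c x) :=
    integrableOn_uIoc_of_locallyIntegrable ((locallyIntegrable_norm hΦ).mul_continuous
      ((continuous_massBetween hΦ c).pow n)) c x
  calc ‖volterra μ Φ Q c w x‖
      ≤ ∫ t in uIoc c x, C * M / n.factorial * (‖Φ t‖ * P t ^ n) := by
        rw [volterra, intervalIntegral.norm_integral_eq_norm_integral_uIoc]
        refine norm_integral_le_of_norm_le (hintegrable.const_mul _) ?_
        filter_upwards [ae_restrict_mem measurableSet_uIoc] with t ht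
        rw [norm_mul]
        refine (mul_le_mul_of_nonneg_left
          (hinner t (uIcc_subset_uIcc_left hx (uIoc_subset_uIcc ht))) (norm_nonneg _)).trans_eq ?_
        ring
    _ = C * M / n.factorial * (P x ^ (n + 1) / (n + 1)) := by
        rw [integral_const_mul, integral_norm_mul_massBetween_pow hΦ]
    _ = M * C * P x ^ (n + 1) / (n + 1).factorial := by
        rw [Nat.factorial_succ]
        push_cast
        field_simp

lemma exists_summable_bound_of_volterra_eq (hΦ : LocallyIntegrable Φ volume)
    (hQ : LocallyIntegrable Q μ) {w : ℕ → ℝ → ℂ} {y : ℝ} (hw : ContinuousOn (w 0) (uIcc c y))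
    (hstep : ∀ n, ∀ x ∈ uIcc c y, w (n + 1) x = volterra μ Φ Q c (w n) x) :
    ∃ b : ℕ → ℝ, Summable b ∧ ∀ n, ∀ x ∈ uIcc c y, ‖w n x‖ ≤ b n := by
  obtain ⟨M, hM⟩ := isCompact_uIcc.exists_bound_of_continuousOn hw
  have hM₀ : 0 ≤ M := (norm_nonneg _).trans (hM c left_mem_uIcc)
  set C := massBetween μ Q c y
  have hC : 0 ≤ C := massBetween_nonneg
  have hiter (n : ℕ) : ∀ x ∈ uIcc c y,
      ‖w n x‖ ≤ M * C ^ n * massBetween volume Φ c x ^ n / n.factorial := by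
    induction n with
    | zero => intro x hx; simpa using hM x hx
    | succ n ih =>
      intro x hx
      rw [hstep n x hx]
      refine (norm_volterra_le hΦ hQ (by positivity) ih x hx).trans_eq ?_
      ring
  refine ⟨fun n ↦ M * ((C * massBetween volume Φ c y) ^ n / n.factorial),
    (Real.summable_pow_div_factorial _).mul_left M, fun n x hx ↦ (hiter n x hx).trans ?_⟩
  simp only [mul_pow, mul_div_assoc', ← mul_assoc]
  gcongr
  · exact massBetween_nonneg
  · exact massBetween_mono hΦ hx

lemma eq_zero_of_eq_volterra (hΦ : LocallyIntegrable Φ volume) (hQ : LocallyIntegrable Q μ)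
    {u : ℝ → ℂ} {y : ℝ} (hu : ContinuousOn u (uIcc c y))
    (hfix : ∀ x ∈ uIcc c y, u x = volterra μ Φ Q c u x) : ∀ x ∈ uIcc c y, u x = 0 := by
  obtain ⟨b, hb, hub⟩ := exists_summable_bound_of_volterra_eq (w := fun _ ↦ u) hΦ hQ hu
    fun _ ↦ hfix
  exact fun x hx ↦ norm_le_zero_iff.1
    (ge_of_tendsto' hb.tendsto_atTop_zero fun n ↦ hub n x hx)

variable [IsLocallyFiniteMeasure μ]

lemma locallyIntegrable_volterra_integrand (hΦ : LocallyIntegrable Φ volume)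
    (hQ : LocallyIntegrable Q μ) {w : ℝ → ℂ} (hw : Continuous w) (c : ℝ) :
    LocallyIntegrable (fun t ↦ Φ t * ∫ s in c..t, Q s * w s ∂μ) volume :=
  (isPrimitive_integral (hQ.mul_continuous hw) c).locallyIntegrable_mul (hQ.mul_continuous hw) hΦ

lemma continuous_volterra (hΦ : LocallyIntegrable Φ volume) (hQ : LocallyIntegrable Q μ)
    {w : ℝ → ℂ} (hw : Continuous w) (c : ℝ) : Continuous (volterra μ Φ Q c w) :=
  (isPrimitive_integral (locallyIntegrable_volterra_integrand hΦ hQ hw c) c).continuous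
    (locallyIntegrable_volterra_integrand hΦ hQ hw c)

lemma hasSum_volterra (hΦ : LocallyIntegrable Φ volume) (hQ : LocallyIntegrable Q μ)
    {w : ℕ → ℝ → ℂ} (hw : ∀ n, Continuous (w n)) {b : ℕ → ℝ} {x : ℝ} (hb : Summable b)
    (hbound : ∀ n, ∀ t ∈ uIcc c x, ‖w n t‖ ≤ b n) :
    HasSum (fun n ↦ volterra μ Φ Q c (w n) x) (volterra μ Φ Q c (fun t ↦ ∑' n, w n t) x) := by
  have hbound' (t : ℝ) (ht : t ∈ uIcc c x) (n : ℕ) : ∀ s ∈ uIoc c t, ‖w n s‖ ≤ b n :=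
    fun s hs ↦ hbound n s (uIoc_subset_uIcc (uIoc_subset_uIoc_of_mem_uIcc ht hs))
  have hb₀ (n : ℕ) : 0 ≤ b n := (norm_nonneg _).trans (hbound n c left_mem_uIcc)
  refine hasSum_integral_mul hΦ (fun n ↦ (integrableOn_uIoc_of_locallyIntegrable
    (locallyIntegrable_volterra_integrand hΦ hQ (hw n) c) c x).aestronglyMeasurable)
    (hb.mul_left (massBetween μ Q c x)) (fun n t ht ↦ ?_) fun t ht ↦ ?_
  · have ht' := uIoc_subset_uIcc ht
    exact (norm_integral_mul_le hQ (hbound' t ht' n)).trans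
      (mul_le_mul_of_nonneg_right (massBetween_mono hQ ht') (hb₀ n))
  · have ht' := uIoc_subset_uIcc ht
    refine hasSum_integral_mul hQ (fun n ↦ (integrableOn_uIoc_of_locallyIntegrable
      (hQ.mul_continuous (hw n)) c t).aestronglyMeasurable) hb (hbound' t ht') fun s hs ↦ ?_
    exact (Summable.of_norm_bounded hb fun n ↦ hbound' t ht' n s hs).hasSum

lemma exists_continuous_eq_add_volterra (hΦ : LocallyIntegrable Φ volume)
    (hQ : LocallyIntegrable Q μ) (c : ℝ) {w₀ : ℝ → ℂ} (hw₀ : Continuous w₀) :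
    ∃ u, Continuous u ∧ ∀ x, u x = w₀ x + volterra μ Φ Q c u x := by
  set w : ℕ → ℝ → ℂ := fun n ↦ (volterra μ Φ Q c)^[n] w₀
  have hsucc (n : ℕ) : w (n + 1) = volterra μ Φ Q c (w n) := Function.iterate_succ_apply' _ _ _
  have hcont (n : ℕ) : Continuous (w n) := by
    induction n with
    | zero => exact hw₀
    | succ n ih => rw [hsucc]; exact continuous_volterra hΦ hQ ih c
  have hbound (x : ℝ) : ∃ b : ℕ → ℝ, Summable b ∧ ∀ n, ∀ t ∈ uIcc c x, ‖w n t‖ ≤ b n :=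
    exists_summable_bound_of_volterra_eq hΦ hQ hw₀.continuousOn fun n t _ ↦ by rw [hsucc]
  refine ⟨fun x ↦ ∑' n, w n x, continuous_tsum_of_summable_bound_uIcc hcont hbound, fun x ↦ ?_⟩
  obtain ⟨b, hb, hwb⟩ := hbound x
  have hsummable := Summable.of_norm_bounded hb fun n ↦ hwb n x right_mem_uIcc
  simp only [hsummable.tsum_eq_zero_add]
  rw [← (hasSum_volterra hΦ hQ hcont hb hwb).tsum_eq]
  simp_rw [hsucc]
  rfl

end Volterra

section RegularPair

variable {μ : Measure ℝ} {Φ u u1 h v v1 k Q G : ℝ → ℂ}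

/-- `(u, u1)` solves the first-order system `du = Φ u1 dt`, `du1 = h dμ` with genuinely locally
integrable right-hand sides, so that none of the integrals involved is a junk value. For a pair
`(u, u^[1])` on a time scale `Φ` is `1 / p̄` and `h` is the density of `u^[1]`. -/
structure IsRegularPair (μ : Measure ℝ) (Φ u u1 h : ℝ → ℂ) : Prop where
  locallyIntegrable_density : LocallyIntegrable h μ
  locallyIntegrable_deriv : LocallyIntegrable (fun t ↦ Φ t * u1 t) volume
  isPrimitive_left : IsPrimitive volume u fun t ↦ Φ t * u1 t
  isPrimitive_right : IsPrimitive μ u1 h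

namespace IsRegularPair

lemma continuous (hu : IsRegularPair μ Φ u u1 h) : Continuous u :=
  hu.isPrimitive_left.continuous hu.locallyIntegrable_deriv

lemma add (hu : IsRegularPair μ Φ u u1 h) (hv : IsRegularPair μ Φ v v1 k) :
    IsRegularPair μ Φ (fun t ↦ u t + v t) (fun t ↦ u1 t + v1 t) fun t ↦ h t + k t where
  locallyIntegrable_density := hu.locallyIntegrable_density.add hv.locallyIntegrable_density
  locallyIntegrable_deriv := by
    simpa only [mul_add] using! hu.locallyIntegrable_deriv.add hv.locallyIntegrable_deriv
  isPrimitive_left := by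
    simpa only [mul_add] using hu.isPrimitive_left.add hu.locallyIntegrable_deriv
      hv.isPrimitive_left hv.locallyIntegrable_deriv
  isPrimitive_right := hu.isPrimitive_right.add hu.locallyIntegrable_density
    hv.isPrimitive_right hv.locallyIntegrable_density

lemma const_mul (hu : IsRegularPair μ Φ u u1 h) (z : ℂ) :
    IsRegularPair μ Φ (fun t ↦ z * u t) (fun t ↦ z * u1 t) fun t ↦ z * h t where
  locallyIntegrable_density := hu.locallyIntegrable_density.smul z
  locallyIntegrable_deriv := by
    simpa only [mul_left_comm _ z] using! hu.locallyIntegrable_deriv.smul z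
  isPrimitive_left := by simpa only [mul_left_comm _ z] using hu.isPrimitive_left.const_mul z
  isPrimitive_right := hu.isPrimitive_right.const_mul z

lemma conj (hu : IsRegularPair μ Φ u u1 h) (hΦ : ∀ t, starRingEnd ℂ (Φ t) = Φ t) :
    IsRegularPair μ Φ (fun t ↦ starRingEnd ℂ (u t)) (fun t ↦ starRingEnd ℂ (u1 t))
      fun t ↦ starRingEnd ℂ (h t) where
  locallyIntegrable_density := locallyIntegrable_conj hu.locallyIntegrable_density
  locallyIntegrable_deriv := by
    simpa only [map_mul, hΦ] using locallyIntegrable_conj hu.locallyIntegrable_deriv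
  isPrimitive_left := by simpa only [map_mul, hΦ] using hu.isPrimitive_left.conj
  isPrimitive_right := hu.isPrimitive_right.conj

theorem eq_zero_of_density_eq_mul (hΦ : LocallyIntegrable Φ volume) (hQ : LocallyIntegrable Q μ)
    (hu : IsRegularPair μ Φ u u1 h) {c y : ℝ} (hh : ∀ t ∈ uIoc c y, h t = Q t * u t)
    (hu₀ : u c = 0) (hu1₀ : u1 c = 0) : u y = 0 ∧ u1 y = 0 := by
  have hu1 (x : ℝ) (hx : x ∈ uIcc c y) : u1 x = ∫ s in c..x, Q s * u s ∂μ := by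
    rw [hu.isPrimitive_right c x, hu1₀, zero_add]
    exact intervalIntegral.integral_congr_ae
      (ae_of_all _ fun t ht ↦ hh t (uIoc_subset_uIoc_of_mem_uIcc hx ht))
  have hfix (x : ℝ) (hx : x ∈ uIcc c y) : u x = volterra μ Φ Q c u x := by
    rw [hu.isPrimitive_left c x, hu₀, zero_add]
    refine intervalIntegral.integral_congr fun t ht ↦ ?_
    simp only [hu1 t (uIcc_subset_uIcc_left hx ht)]
  have hzero := eq_zero_of_eq_volterra hΦ hQ hu.continuous.continuousOn hfix
  refine ⟨hzero y right_mem_uIcc, ?_⟩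
  rw [hu1 y right_mem_uIcc, intervalIntegral.integral_congr (g := fun _ ↦ 0) fun t ht ↦ ?_,
    intervalIntegral.integral_zero]
  simp only [hzero t ht, mul_zero]

variable [IsLocallyFiniteMeasure μ]

lemma of_locallyIntegrable (hΦ : LocallyIntegrable Φ volume) (hh : LocallyIntegrable h μ)
    (hu : IsPrimitive volume u fun t ↦ Φ t * u1 t) (hu1 : IsPrimitive μ u1 h) :
    IsRegularPair μ Φ u u1 h :=
  ⟨hh, hu1.locallyIntegrable_mul hh hΦ, hu, hu1⟩

/-- A non-integrable density would force `u1` to be constant off one point, hence `u` to be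
continuous and `Q u` to be locally integrable after all. -/
lemma of_isPrimitive_mul (hΦ : LocallyIntegrable Φ volume) (hQ : LocallyIntegrable Q μ)
    (hu : IsPrimitive volume u fun t ↦ Φ t * u1 t) (hu1 : IsPrimitive μ u1 fun t ↦ Q t * u t) :
    IsRegularPair μ Φ u u1 fun t ↦ Q t * u t := by
  refine of_locallyIntegrable hΦ (by_contra fun hbad ↦ ?_) hu hu1
  obtain ⟨t₀, k, hk⟩ := hu1.exists_eq_const_of_not_locallyIntegrable hbad
  have hΦu1 : LocallyIntegrable (fun t ↦ Φ t * u1 t) volume := by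
    refine (hΦ.smul k).congr ?_
    filter_upwards [Measure.ae_ne volume t₀] with t ht
    simp only [Pi.smul_apply, smul_eq_mul, hk t ht, mul_comm]
  exact hbad (hQ.mul_continuous (hu.continuous hΦu1))

/-- Lagrange's identity. -/
theorem wr_eq_add_integral (hu : IsRegularPair μ Φ u u1 h) (hv : IsRegularPair μ Φ v v1 k)
    (c x : ℝ) :
    Wr u u1 v v1 x = Wr u u1 v v1 c + ∫ t in c..x, (u t * k t - h t * v t) ∂μ := by
  have huv := hu.isPrimitive_left.mul_sub_mul hu.locallyIntegrable_deriv hv.isPrimitive_right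
    hv.locallyIntegrable_density c x
  have hvu := hv.isPrimitive_left.mul_sub_mul hv.locallyIntegrable_deriv hu.isPrimitive_right
    hu.locallyIntegrable_density c x
  simp only [mul_right_comm _ (v1 _) (u1 _)] at hvu
  rw [intervalIntegral.integral_sub
    (intervalIntegrable_of_locallyIntegrable
      (hv.locallyIntegrable_density.continuous_mul hu.continuous) c x)
    (intervalIntegrable_of_locallyIntegrable
      (hu.locallyIntegrable_density.mul_continuous hv.continuous) c x)]
  simp only [mul_comm (h _)]
  unfold Wr
  linear_combination huv - hvu

end IsRegularPair

theorem exists_isRegularPair_of_initial_values [IsLocallyFiniteMeasure μ]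
    (hΦ : LocallyIntegrable Φ volume) (hQ : LocallyIntegrable Q μ) (hG : LocallyIntegrable G μ)
    (c : ℝ) (α β : ℂ) :
    ∃ u u1, IsRegularPair μ Φ u u1 (fun t ↦ Q t * u t + G t) ∧ u c = α ∧ u1 c = β := by
  set k : ℝ → ℂ := fun t ↦ β + ∫ s in c..t, G s ∂μ
  have hk : IsPrimitive μ k G := (isPrimitive_integral hG c).const_add β
  have hΦk := hk.locallyIntegrable_mul hG hΦ
  have hw₀ := ((isPrimitive_integral hΦk c).const_add α)
  obtain ⟨u, hu, hfix⟩ := exists_continuous_eq_add_volterra hΦ hQ c (hw₀.continuous hΦk)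
  have hQu := hQ.mul_continuous hu
  have hdensity : LocallyIntegrable (fun t ↦ Q t * u t + G t) μ := hQu.add hG
  set u1 : ℝ → ℂ := fun t ↦ β + ∫ s in c..t, (Q s * u s + G s) ∂μ
  have hu1 : IsPrimitive μ u1 fun t ↦ Q t * u t + G t :=
    (isPrimitive_integral hdensity c).const_add β
  have hΦu1 := hu1.locallyIntegrable_mul hdensity hΦ
  have hu_eq (x : ℝ) : u x = α + ∫ t in c..x, Φ t * u1 t := by
    rw [hfix x, volterra, add_assoc, ← intervalIntegral.integral_add
      (intervalIntegrable_of_locallyIntegrable hΦk c x) (intervalIntegrable_of_locallyIntegrable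
        (locallyIntegrable_volterra_integrand hΦ hQ hu c) c x)]
    congr 2 with t
    simp only [k, u1]
    rw [intervalIntegral.integral_add (intervalIntegrable_of_locallyIntegrable hQu c t)
      (intervalIntegrable_of_locallyIntegrable hG c t)]
    ring
  have hu_prim : IsPrimitive volume u fun t ↦ Φ t * u1 t := by
    rw [funext hu_eq]
    exact (isPrimitive_integral hΦu1 c).const_add α
  exact ⟨u, u1, ⟨hdensity, hΦu1, hu_prim, hu1⟩, by simp [hu_eq], by simp [u1]⟩

end RegularPair

section WeightedMeasure

variable {μ : Measure ℝ} {r : ℝ → ℝ}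

/-- The measure `r dμ`, for `μ = dσ_κ` the measure of the Hilbert space `L²(𝕋_κ; r dσ_κ)`. -/
noncomputable def weightedMeasure (μ : Measure ℝ) (r : ℝ → ℝ) : Measure ℝ :=
  μ.withDensity fun t ↦ ENNReal.ofReal (r t)

lemma weightedMeasure_absolutelyContinuous : weightedMeasure μ r ≪ μ :=
  withDensity_absolutelyContinuous μ _

lemma ae_of_ae_weightedMeasure {P : ℝ → Prop} (hr : LocallyIntegrable r μ)
    (hrpos : ∀ᵐ t ∂μ, 0 < r t) (h : ∀ᵐ t ∂weightedMeasure μ r, P t) : ∀ᵐ t ∂μ, P t := by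
  rw [weightedMeasure, ae_withDensity_iff' hr.aestronglyMeasurable.aemeasurable.ennreal_ofReal] at h
  filter_upwards [h, hrpos] with t ht hpos
  exact ht (ENNReal.ofReal_pos.mpr hpos).ne'

lemma isLocallyFiniteMeasure_weightedMeasure [IsLocallyFiniteMeasure μ]
    (hr : LocallyIntegrable r μ) : IsLocallyFiniteMeasure (weightedMeasure μ r) where
  finiteAtNhds x := by
    obtain ⟨s, hs, hrs⟩ := hr x
    refine ⟨s, hs, ?_⟩
    rw [weightedMeasure, withDensity_apply' _ s]
    exact (lintegral_mono fun t ↦ Real.ofReal_le_enorm _).trans_lt hrs.2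

lemma setIntegral_weightedMeasure {s : Set ℝ} (hs : MeasurableSet s) (hr : LocallyIntegrable r μ)
    (hrpos : ∀ᵐ t ∂μ, 0 < r t) (F : ℝ → ℂ) :
    ∫ t in s, F t ∂weightedMeasure μ r = ∫ t in s, r t * F t ∂μ := by
  rw [weightedMeasure, setIntegral_withDensity_eq_setIntegral_toReal_smul₀
    hr.aestronglyMeasurable.aemeasurable.ennreal_ofReal.restrict
    (ae_of_all _ fun _ ↦ ENNReal.ofReal_lt_top) F hs]
  refine integral_congr_ae (ae_restrict_of_ae (hrpos.mono fun t ht ↦ ?_))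
  simp only [ENNReal.toReal_ofReal ht.le, Complex.real_smul]

lemma intervalIntegral_weightedMeasure (hr : LocallyIntegrable r μ) (hrpos : ∀ᵐ t ∂μ, 0 < r t)
    (F : ℝ → ℂ) (c x : ℝ) :
    ∫ t in c..x, F t ∂weightedMeasure μ r = ∫ t in c..x, r t * F t ∂μ := by
  simp only [intervalIntegral, setIntegral_weightedMeasure measurableSet_Ioc hr hrpos]

lemma memLp_restrict_uIoc_of_continuous {E : Type*} [NormedAddCommGroup E] {m : Measure ℝ}
    [IsLocallyFiniteMeasure m] {f : ℝ → E} (hf : Continuous f) (p : ℝ≥0∞) (c x : ℝ) :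
    MemLp f p (m.restrict (uIoc c x)) := by
  obtain ⟨C, hC⟩ := isCompact_uIcc.exists_bound_of_continuousOn (hf.continuousOn (s := uIcc c x))
  have : IsFiniteMeasure (m.restrict (uIoc c x)) :=
    isFiniteMeasure_restrict.mpr
      ((measure_mono uIoc_subset_uIcc).trans_lt isCompact_uIcc.measure_lt_top).ne
  exact .of_bound hf.aestronglyMeasurable C (ae_restrict_of_forall_mem
    measurableSet_uIoc fun t ht ↦ hC t (uIoc_subset_uIcc ht))

end WeightedMeasure

section Solutions

variable {μ : Measure ℝ} {Φ u u1 h v v1 k g : ℝ → ℂ} {r q : ℝ → ℝ} {z : ℂ} {c : ℝ}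

lemma ellApply_mul_sub_mul {t : ℝ} (ht : r t ≠ 0) :
    r t * (ellApply r q h u t * v t - u t * ellApply r q k v t) = u t * k t - h t * v t := by
  have : (r t : ℂ) ≠ 0 := mod_cast ht
  unfold ellApply
  field_simp
  ring

theorem IsRegularPair.wr_eq_add_integral_ellApply [IsLocallyFiniteMeasure μ]
    (hr : LocallyIntegrable r μ) (hrpos : ∀ᵐ t ∂μ, 0 < r t) (q : ℝ → ℝ)
    (hu : IsRegularPair μ Φ u u1 h) (hv : IsRegularPair μ Φ v v1 k) (c x : ℝ) :
    Wr u u1 v v1 x = Wr u u1 v v1 c +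
      ∫ t in c..x, (ellApply r q h u t * v t - u t * ellApply r q k v t) ∂weightedMeasure μ r := by
  rw [hu.wr_eq_add_integral hv c x, intervalIntegral_weightedMeasure hr hrpos]
  congr 1
  refine intervalIntegral.integral_congr_ae (hrpos.mono fun t ht _ ↦ ?_)
  rw [ellApply_mul_sub_mul ht.ne']

/-- `(u, u1)` solves `(ℓ - z) u = g`, where `Φ = 1 / p̄`. Unlike `IsSLSol` this includes the
integrability of the integrands. -/
def IsSolution (μ : Measure ℝ) (Φ : ℝ → ℂ) (r q : ℝ → ℝ) (z : ℂ) (g u u1 : ℝ → ℂ) : Prop :=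
  IsRegularPair μ Φ u u1 fun t ↦ ((q t : ℂ) - z * r t) * u t - r t * g t

lemma locallyIntegrable_ofReal {f : ℝ → ℝ} (hf : LocallyIntegrable f μ) :
    LocallyIntegrable (fun t ↦ (f t : ℂ)) μ := fun x ↦
  let ⟨s, hs, hfs⟩ := hf x
  ⟨s, hs, hfs.ofReal⟩

lemma locallyIntegrable_sub_const_mul (hr : LocallyIntegrable r μ) (hq : LocallyIntegrable q μ)
    (z : ℂ) : LocallyIntegrable (fun t ↦ (q t : ℂ) - z * r t) μ :=
  (locallyIntegrable_ofReal hq).sub ((locallyIntegrable_ofReal hr).smul z)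

theorem exists_isSolution [IsLocallyFiniteMeasure μ] (hΦ : LocallyIntegrable Φ volume)
    (hr : LocallyIntegrable r μ) (hq : LocallyIntegrable q μ)
    (hg : LocallyIntegrable (fun t ↦ r t * g t) μ) (z : ℂ) (c : ℝ) (α β : ℂ) :
    ∃ u u1, IsSolution μ Φ r q z g u u1 ∧ u c = α ∧ u1 c = β := by
  simpa only [IsSolution, sub_eq_add_neg] using! exists_isRegularPair_of_initial_values hΦ
    (locallyIntegrable_sub_const_mul hr hq z) hg.neg c α β

namespace IsSolution

lemma ellApply_eq (hrpos : ∀ᵐ t ∂μ, 0 < r t) (q : ℝ → ℝ) (z : ℂ) (g u : ℝ → ℂ) :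
    ∀ᵐ t ∂weightedMeasure μ r,
      ellApply r q (fun t ↦ ((q t : ℂ) - z * r t) * u t - r t * g t) u t = z * u t + g t := by
  refine weightedMeasure_absolutelyContinuous.ae_le (hrpos.mono fun t ht ↦ ?_)
  have : (r t : ℂ) ≠ 0 := mod_cast ht.ne'
  unfold ellApply
  field_simp
  ring

lemma wr_eq_add_integral [IsLocallyFiniteMeasure μ] (hr : LocallyIntegrable r μ)
    (hrpos : ∀ᵐ t ∂μ, 0 < r t) (hu : IsSolution μ Φ r q z g u u1) (hv : IsRegularPair μ Φ v v1 k)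
    (c x : ℝ) :
    Wr u u1 v v1 x = Wr u u1 v v1 c + ∫ t in c..x,
      (g t * v t + u t * (z * v t - ellApply r q k v t)) ∂weightedMeasure μ r := by
  rw [IsRegularPair.wr_eq_add_integral_ellApply hr hrpos q hu hv c x]
  congr 1
  refine intervalIntegral.integral_congr_ae ((ellApply_eq hrpos q z g u).mono fun t ht _ ↦ ?_)
  rw [ht]
  ring

lemma wr_eq_of_homogeneous [IsLocallyFiniteMeasure μ] (hr : LocallyIntegrable r μ)
    (hrpos : ∀ᵐ t ∂μ, 0 < r t) (hu : IsSolution μ Φ r q z g u u1)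
    (hv : IsSolution μ Φ r q z 0 v v1) (c x : ℝ) :
    Wr u u1 v v1 x = Wr u u1 v v1 c + ∫ t in c..x, g t * v t ∂weightedMeasure μ r := by
  rw [wr_eq_add_integral hr hrpos hu hv c x]
  congr 1
  refine intervalIntegral.integral_congr_ae ((ellApply_eq hrpos q z 0 v).mono fun t ht _ ↦ ?_)
  rw [ht, Pi.zero_apply]
  ring

lemma add_const_mul (hu : IsSolution μ Φ r q z g u u1) (hv : IsSolution μ Φ r q z k v v1) (a : ℂ) :
    IsSolution μ Φ r q z (fun t ↦ g t + a * k t) (fun t ↦ u t + a * v t)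
      fun t ↦ u1 t + a * v1 t := by
  unfold IsSolution
  convert IsRegularPair.add hu (IsRegularPair.const_mul hv a) using 2
  ring

theorem eq_zero (hΦ : LocallyIntegrable Φ volume) (hr : LocallyIntegrable r μ)
    (hq : LocallyIntegrable q μ) (hu : IsSolution μ Φ r q z g u u1) {y : ℝ}
    (hg : ∀ t ∈ uIoc c y, g t = 0) (hu₀ : u c = 0) (hu1₀ : u1 c = 0) : u y = 0 ∧ u1 y = 0 :=
  IsRegularPair.eq_zero_of_density_eq_mul hΦ (locallyIntegrable_sub_const_mul hr hq z) hu
    (fun t ht ↦ by simp only [hg t ht, mul_zero, sub_zero]) hu₀ hu1₀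

theorem eq_of_eq (hΦ : LocallyIntegrable Φ volume) (hr : LocallyIntegrable r μ)
    (hq : LocallyIntegrable q μ) (hu : IsSolution μ Φ r q z g u u1)
    (hv : IsSolution μ Φ r q z k v v1) {y : ℝ} (hgk : ∀ t ∈ uIoc c y, g t = k t)
    (h₀ : u c = v c) (h1₀ : u1 c = v1 c) : u y = v y ∧ u1 y = v1 y := by
  have hzero := eq_zero hΦ hr hq (hu.add_const_mul hv (-1)) (c := c) (y := y)
    (fun t ht ↦ by rw [hgk t ht]; ring) (by rw [h₀]; ring) (by rw [h1₀]; ring)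
  exact ⟨by linear_combination hzero.1, by linear_combination hzero.2⟩

lemma conj (hΦreal : ∀ t, starRingEnd ℂ (Φ t) = Φ t) (hu : IsSolution μ Φ r q z g u u1) :
    IsSolution μ Φ r q (starRingEnd ℂ z) (fun t ↦ starRingEnd ℂ (g t))
      (fun t ↦ starRingEnd ℂ (u t)) fun t ↦ starRingEnd ℂ (u1 t) := by
  simpa only [IsSolution, map_sub, map_mul, Complex.conj_ofReal] using IsRegularPair.conj hu hΦreal

theorem conj_eq_self (hΦ : LocallyIntegrable Φ volume) (hr : LocallyIntegrable r μ)
    (hq : LocallyIntegrable q μ) (hΦreal : ∀ t, starRingEnd ℂ (Φ t) = Φ t)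
    (hu : IsSolution μ Φ r q 0 0 u u1) (hu₀ : starRingEnd ℂ (u c) = u c)
    (hu1₀ : starRingEnd ℂ (u1 c) = u1 c) (x : ℝ) :
    starRingEnd ℂ (u x) = u x ∧ starRingEnd ℂ (u1 x) = u1 x := by
  have hconj := hu.conj hΦreal
  rw [map_zero] at hconj
  exact hconj.eq_of_eq hΦ hr hq hu (fun t _ ↦ map_zero _) hu₀ hu1₀

end IsSolution

theorem exists_isSolution_wr_eq_one [IsLocallyFiniteMeasure μ] (hΦ : LocallyIntegrable Φ volume)
    (hr : LocallyIntegrable r μ) (hrpos : ∀ᵐ t ∂μ, 0 < r t) (hq : LocallyIntegrable q μ) (z : ℂ) :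
    ∃ u u1 v v1, IsSolution μ Φ r q z 0 u u1 ∧ IsSolution μ Φ r q z 0 v v1 ∧
      (u 0 = 1 ∧ u1 0 = 0) ∧ ∀ x, Wr u u1 v v1 x = 1 := by
  have h0 : LocallyIntegrable (fun t ↦ r t * (0 : ℝ → ℂ) t) μ := by
    simpa only [Pi.zero_apply, mul_zero] using locallyIntegrable_zero
  obtain ⟨u, u1, hu, hu₀, hu1₀⟩ := exists_isSolution hΦ hr hq h0 z 0 1 0
  obtain ⟨v, v1, hv, hv₀, hv1₀⟩ := exists_isSolution hΦ hr hq h0 z 0 0 1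
  refine ⟨u, u1, v, v1, hu, hv, ⟨hu₀, hu1₀⟩, fun x ↦ ?_⟩
  rw [hu.wr_eq_of_homogeneous hr hrpos hv 0 x]
  simp [Wr, hu₀, hu1₀, hv₀, hv1₀]

end Solutions

section LpNorm

variable {α E : Type*} {mα : MeasurableSpace α} [NormedAddCommGroup E] {m ν : Measure α}

lemma lpNorm_mono_measure {p : ℝ≥0∞} {f : α → E} (hf : MemLp f p m) (h : ν ≤ m) :
    lpNorm f p ν ≤ lpNorm f p m := by
  rw [← toReal_eLpNorm hf.aestronglyMeasurable,
    ← toReal_eLpNorm (hf.aestronglyMeasurable.mono_measure h)]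
  exact ENNReal.toReal_mono hf.eLpNorm_ne_top (eLpNorm_mono_measure f h)

lemma lpNorm_two_eq_sqrt {f : α → E} (hf : AEStronglyMeasurable f m) :
    lpNorm f 2 m = √(∫ x, ‖f x‖ ^ 2 ∂m) := by
  rw [lpNorm_eq_integral_norm_rpow_toReal two_ne_zero ENNReal.ofNat_ne_top hf, Real.sqrt_eq_rpow]
  simp

lemma norm_integral_mul_le_lpNorm_mul_lpNorm {𝕜 : Type*} [RCLike 𝕜] {f g : α → 𝕜}
    (hf : MemLp f 2 m) (hg : MemLp g 2 m) :
    ‖∫ x, f x * g x ∂m‖ ≤ lpNorm f 2 m * lpNorm g 2 m := by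
  have htwo : (2 : ℝ≥0∞) = ENNReal.ofReal 2 := by simp
  have hHolder := integral_mul_norm_le_Lp_mul_Lq Real.HolderConjugate.two_two
    (htwo ▸ hf) (htwo ▸ hg)
  simp only [← norm_mul, Real.rpow_two, ← Real.sqrt_eq_rpow] at hHolder
  rw [lpNorm_two_eq_sqrt hf.aestronglyMeasurable, lpNorm_two_eq_sqrt hg.aestronglyMeasurable]
  exact (norm_integral_le_integral_norm _).trans hHolder

lemma mul_lpNorm_le_of_mul_norm_le {p : ℝ≥0∞} (hp : 1 ≤ p) {f g u : α → E} {a b : ℝ} {s : Set α}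
    (hs : MeasurableSet s) (ha : 0 ≤ a) (hb : 0 ≤ b) (hf : MemLp f p m) (hg : MemLp g p m)
    (hu : MemLp u p (m.restrict s)) (h : ∀ x ∈ s, a * ‖u x‖ ≤ b * (‖f x‖ + ‖g x‖)) :
    a * lpNorm u p (m.restrict s) ≤ b * (lpNorm f p m + lpNorm g p m) := by
  have hfg : MemLp (fun x ↦ ‖f x‖ + ‖g x‖) p m := hf.norm.add hg.norm
  calc a * lpNorm u p (m.restrict s)
      = lpNorm (a • fun x ↦ ‖u x‖) p (m.restrict s) := by
        rw [lpNorm_const_smul, lpNorm_norm hu.aestronglyMeasurable, coe_nnnorm,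
          Real.norm_of_nonneg ha]
    _ ≤ lpNorm (b • fun x ↦ ‖f x‖ + ‖g x‖) p (m.restrict s) := by
        rw [← toReal_eLpNorm (hu.norm.const_smul a).aestronglyMeasurable,
          ← toReal_eLpNorm ((hfg.const_smul b).restrict s).aestronglyMeasurable]
        refine ENNReal.toReal_mono ((hfg.const_smul b).restrict s).eLpNorm_ne_top
          (eLpNorm_mono_ae_real (ae_restrict_of_forall_mem hs fun x hx ↦ ?_))
        simpa [abs_of_nonneg ha] using h x hx
    _ = b * lpNorm (fun x ↦ ‖f x‖ + ‖g x‖) p (m.restrict s) := by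
        rw [lpNorm_const_smul, coe_nnnorm, Real.norm_of_nonneg hb]
    _ ≤ b * lpNorm (fun x ↦ ‖f x‖ + ‖g x‖) p m := by
        gcongr
        exact lpNorm_mono_measure hfg Measure.restrict_le_self
    _ ≤ b * (lpNorm f p m + lpNorm g p m) := by
        gcongr
        rw [← lpNorm_norm hf.aestronglyMeasurable, ← lpNorm_norm hg.aestronglyMeasurable]
        exact lpNorm_add_le hf.norm hp

end LpNorm

section Ends

variable {l : Filter ℝ} {m : Measure ℝ}

lemma exists_hasAntitoneBasis_ordConnected (hl : l = atBot ∨ l = atTop) :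
    ∃ s : ℕ → Set ℝ, l.HasAntitoneBasis s ∧ (∀ n, (s n).OrdConnected) ∧ ⋂ n, s n = ∅ := by
  have hIci : (atTop : Filter ℝ).HasAntitoneBasis fun n : ℕ ↦ Ici (n : ℝ) :=
    atTop_hasAntitoneBasis_of_archimedean
  have hempty : ⋂ n : ℕ, Ici (n : ℝ) = ∅ := eq_empty_of_forall_notMem fun x hx ↦
    let ⟨n, hn⟩ := exists_nat_gt x
    (mem_iInter.mp hx n).not_gt hn
  rcases hl with rfl | rfl
  · refine ⟨fun n ↦ Neg.neg ⁻¹' Ici (n : ℝ), comap_neg_atTop (G := ℝ) ▸ hIci.comap Neg.neg,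
      fun n ↦ ?_, by rw [← preimage_iInter, hempty, preimage_empty]⟩
    simpa only [neg_preimage, neg_Ici] using ordConnected_Iic
  · exact ⟨_, hIci, fun n ↦ ordConnected_Ici, hempty⟩

lemma tendsto_lpNorm_restrict {s : ℕ → Set ℝ} (hs : Antitone s) (hsm : ∀ n, MeasurableSet (s n))
    (hs_empty : ⋂ n, s n = ∅) {f : ℝ → ℂ} (hf : MemLp f 2 m) :
    Tendsto (fun n ↦ lpNorm f 2 (m.restrict (s n))) atTop (𝓝 0) := by
  have hsq : Integrable (fun t ↦ ‖f t‖ ^ 2) m :=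
    (memLp_two_iff_integrable_sq_norm hf.aestronglyMeasurable).mp hf
  have htend := (tendsto_setIntegral_of_antitone hsm hs ⟨0, hsq.integrableOn⟩).sqrt
  rw [hs_empty, setIntegral_empty, Real.sqrt_zero] at htend
  simpa only [lpNorm_two_eq_sqrt hf.aestronglyMeasurable.restrict] using htend

lemma exists_tendsto_intervalIntegral (hl : l = atBot ∨ l = atTop) {F : ℝ → ℂ}
    (hF : Integrable F m) (c : ℝ) : ∃ w, Tendsto (fun x ↦ ∫ t in c..x, F t ∂m) l (𝓝 w) := by
  rcases hl with rfl | rfl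
  · simp only [intervalIntegral.integral_symm _ c]
    exact ⟨_, (intervalIntegral_tendsto_integral_Iic c hF.integrableOn tendsto_id).neg⟩
  · exact ⟨_, intervalIntegral_tendsto_integral_Ioi c hF.integrableOn tendsto_id⟩

/-- Square integrability of `u` near the end `l` of the real line. -/
def SquareIntegrableAt (m : Measure ℝ) (l : Filter ℝ) (u : ℝ → ℂ) : Prop :=
  IntegrableAtFilter (fun t ↦ ‖u t‖ ^ 2) l m

lemma squareIntegrableAt_zero : SquareIntegrableAt m l 0 :=
  ⟨univ, univ_mem, by simp⟩

lemma SquareIntegrableAt.congr [l.IsMeasurablyGenerated] {u v : ℝ → ℂ}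
    (hu : SquareIntegrableAt m l u) (h : v =ᶠ[l] u) : SquareIntegrableAt m l v := by
  obtain ⟨s, hs, hus⟩ := hu
  obtain ⟨t, ht, htm, hts⟩ := (h.and hs).exists_measurable_mem
  refine ⟨t, ht, (hus.mono_set fun x hx ↦ (hts x hx).2).congr_fun (fun x hx ↦ ?_) htm⟩
  simp only [(hts x hx).1]

variable [IsLocallyFiniteMeasure m] {u : ℝ → ℂ}

lemma memLp_two_of_squareIntegrableAt (hu : Continuous u) (hbot : SquareIntegrableAt m atBot u)
    (htop : SquareIntegrableAt m atTop u) : MemLp u 2 m := by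
  rw [memLp_two_iff_integrable_sq_norm hu.aestronglyMeasurable]
  exact integrable_iff_integrableAtFilter_atBot_atTop.mpr
    ⟨⟨hbot, htop⟩, (hu.norm.pow 2).locallyIntegrable⟩

lemma squareIntegrableAt_of_lpNorm_le (hl : l = atBot ∨ l = atTop) (hu : Continuous u) {c C : ℝ}
    (hC : ∀ᶠ x in l, lpNorm u 2 (m.restrict (uIoc c x)) ≤ C) : SquareIntegrableAt m l u := by
  have hint (a b : ℝ) : IntegrableOn (fun t ↦ ‖u t‖ ^ 2) (Ioc a b) m :=
    (hu.norm.pow 2).locallyIntegrable.integrableOn_isCompact isCompact_Icc |>.mono_set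
      Ioc_subset_Icc_self
  have hbound : ∀ᶠ x in l, ∫ t in uIoc c x, ‖‖u t‖ ^ 2‖ ∂m ≤ C ^ 2 := hC.mono fun x hx ↦ by
    simp only [norm_pow, norm_norm]
    rw [lpNorm_two_eq_sqrt hu.aestronglyMeasurable] at hx
    exact (Real.sqrt_le_left ((Real.sqrt_nonneg _).trans hx)).mp hx
  rcases hl with rfl | rfl
  · refine ⟨Iic c, Iic_mem_atBot c, integrableOn_Iic_of_intervalIntegral_norm_bounded (C ^ 2) c
      (hint · c) tendsto_id ?_⟩
    filter_upwards [hbound, eventually_le_atBot c] with x hx hxc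
    rwa [intervalIntegral.integral_of_le hxc, ← uIoc_of_ge hxc]
  · refine ⟨Ioi c, Ioi_mem_atTop c, integrableOn_Ioi_of_intervalIntegral_norm_bounded (C ^ 2) c
      (hint c) tendsto_id ?_⟩
    filter_upwards [hbound, eventually_ge_atTop c] with x hx hxc
    rwa [intervalIntegral.integral_of_le hxc, ← uIoc_of_le hxc]

end Ends

section MaximalDomain

variable {μ : Measure ℝ} {Φ u u1 f f1 h g g1 k : ℝ → ℂ} {r q : ℝ → ℝ} {z : ℂ} {l : Filter ℝ}

/-- The maximal domain `D_ℓ²`; the density `h` of `f^[1]` is kept as an argument. -/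
structure MemMaxDomain (μ : Measure ℝ) (Φ : ℝ → ℂ) (r q : ℝ → ℝ) (f f1 h : ℝ → ℂ) : Prop where
  isRegularPair : IsRegularPair μ Φ f f1 h
  memLp : MemLp f 2 (weightedMeasure μ r)
  memLp_ellApply : MemLp (ellApply r q h f) 2 (weightedMeasure μ r)

namespace MemMaxDomain

lemma memLp_sub (hf : MemMaxDomain μ Φ r q f f1 h) (z : ℂ) :
    MemLp (fun t ↦ z * f t - ellApply r q h f t) 2 (weightedMeasure μ r) :=
  (hf.memLp.const_mul z).sub hf.memLp_ellApply

variable [IsLocallyFiniteMeasure μ]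

theorem exists_tendsto_wr (hr : LocallyIntegrable r μ) (hrpos : ∀ᵐ t ∂μ, 0 < r t)
    (hl : l = atBot ∨ l = atTop) (hf : MemMaxDomain μ Φ r q f f1 h)
    (hg : MemMaxDomain μ Φ r q g g1 k) : ∃ w, Tendsto (Wr f f1 g g1) l (𝓝 w) := by
  have hint : Integrable (fun t ↦ ellApply r q h f t * g t - f t * ellApply r q k g t)
      (weightedMeasure μ r) :=
    (hf.memLp_ellApply.integrable_mul hg.memLp).sub (hf.memLp.integrable_mul hg.memLp_ellApply)
  obtain ⟨w, hw⟩ := exists_tendsto_intervalIntegral hl hint 0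
  refine ⟨_, (hw.const_add (Wr f f1 g g1 0)).congr fun x ↦ ?_⟩
  rw [hf.isRegularPair.wr_eq_add_integral_ellApply hr hrpos q hg.isRegularPair 0 x]

lemma norm_wr_le (hr : LocallyIntegrable r μ) (hrpos : ∀ᵐ t ∂μ, 0 < r t)
    (hf : MemMaxDomain μ Φ r q f f1 h) (hu : IsSolution μ Φ r q z 0 u u1) {c x t : ℝ}
    (ht : t ∈ uIoc c x) {D : Set ℝ} (hD : uIoc c x ⊆ D) :
    ‖Wr u u1 f f1 t‖ ≤ ‖Wr u u1 f f1 c‖ +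
      lpNorm u 2 ((weightedMeasure μ r).restrict (uIoc c x)) *
        lpNorm (fun t ↦ z * f t - ellApply r q h f t) 2 ((weightedMeasure μ r).restrict D) := by
  have := isLocallyFiniteMeasure_weightedMeasure hr
  have hct := uIoc_subset_uIoc_of_mem_uIcc (uIoc_subset_uIcc ht)
  have hu_mem (y : ℝ) := memLp_restrict_uIoc_of_continuous (m := weightedMeasure μ r)
    (IsRegularPair.continuous hu) 2 c y
  have hφ := hf.memLp_sub z
  rw [hu.wr_eq_add_integral hr hrpos hf.isRegularPair c t]
  simp only [Pi.zero_apply, zero_mul, zero_add]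
  refine (norm_add_le _ _).trans (add_le_add_right ?_ _)
  rw [intervalIntegral.norm_intervalIntegral_eq]
  refine (norm_integral_mul_le_lpNorm_mul_lpNorm (hu_mem t) (hφ.restrict _)).trans ?_
  exact mul_le_mul (lpNorm_mono_measure (hu_mem x) (Measure.restrict_mono_set _ hct))
    (lpNorm_mono_measure (hφ.restrict D) (Measure.restrict_mono_set _ (hct.trans hD)))
    lpNorm_nonneg lpNorm_nonneg

/-- The norm of `u` bounds itself: `u W(f, g) = f W(u, g) - g W(u, f)`, and the Wronskians on the
right are bounded by `A + ε N`, where `N` is the norm of `u`. -/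
theorem mul_lpNorm_le (hr : LocallyIntegrable r μ) (hrpos : ∀ᵐ t ∂μ, 0 < r t)
    (hf : MemMaxDomain μ Φ r q f f1 h) (hg : MemMaxDomain μ Φ r q g g1 k)
    (hu : IsSolution μ Φ r q z 0 u u1) {c x δ ε A : ℝ} {D : Set ℝ} (hD : uIoc c x ⊆ D)
    (hδ : 0 ≤ δ) (hW : ∀ t ∈ uIoc c x, δ ≤ ‖Wr f f1 g g1 t‖)
    (hfA : ‖Wr u u1 f f1 c‖ ≤ A) (hgA : ‖Wr u u1 g g1 c‖ ≤ A)
    (hfε : lpNorm (fun t ↦ z * f t - ellApply r q h f t) 2 ((weightedMeasure μ r).restrict D) ≤ ε)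
    (hgε : lpNorm (fun t ↦ z * g t - ellApply r q k g t) 2 ((weightedMeasure μ r).restrict D) ≤ ε)
    (hε : 2 * (lpNorm f 2 (weightedMeasure μ r) + lpNorm g 2 (weightedMeasure μ r)) * ε ≤ δ) :
    δ * lpNorm u 2 ((weightedMeasure μ r).restrict (uIoc c x)) ≤
      2 * A * (lpNorm f 2 (weightedMeasure μ r) + lpNorm g 2 (weightedMeasure μ r)) := by
  have := isLocallyFiniteMeasure_weightedMeasure hr
  set N := lpNorm u 2 ((weightedMeasure μ r).restrict (uIoc c x))
  have hN : 0 ≤ N := lpNorm_nonneg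
  have hε0 : 0 ≤ ε := lpNorm_nonneg.trans hfε
  have hpointwise : ∀ t ∈ uIoc c x, δ * ‖u t‖ ≤ (A + N * ε) * (‖f t‖ + ‖g t‖) := fun t ht ↦ by
    have hf_wr := (hf.norm_wr_le hr hrpos hu ht hD).trans
      (add_le_add hfA (mul_le_mul_of_nonneg_left hfε hN))
    have hg_wr := (hg.norm_wr_le hr hrpos hu ht hD).trans
      (add_le_add hgA (mul_le_mul_of_nonneg_left hgε hN))
    calc δ * ‖u t‖ ≤ ‖Wr f f1 g g1 t‖ * ‖u t‖ := by gcongr; exact hW t ht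
      _ = ‖f t * Wr u u1 g g1 t - g t * Wr u u1 f f1 t‖ := by
        rw [← norm_mul]
        unfold Wr
        congr 1
        ring
      _ ≤ ‖f t‖ * ‖Wr u u1 g g1 t‖ + ‖g t‖ * ‖Wr u u1 f f1 t‖ := by
        simpa only [norm_mul] using norm_sub_le (f t * Wr u u1 g g1 t) (g t * Wr u u1 f f1 t)
      _ ≤ ‖f t‖ * (A + N * ε) + ‖g t‖ * (A + N * ε) := by gcongr
      _ = (A + N * ε) * (‖f t‖ + ‖g t‖) := by ring
  have hself := mul_lpNorm_le_of_mul_norm_le one_le_two measurableSet_uIoc hδ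
    (add_nonneg ((norm_nonneg _).trans hfA) (mul_nonneg hN hε0)) hf.memLp hg.memLp
    (memLp_restrict_uIoc_of_continuous (IsRegularPair.continuous hu) 2 c x) hpointwise
  linear_combination 2 * hself + N * hε

theorem squareIntegrableAt_of_tendsto_wr (hr : LocallyIntegrable r μ) (hrpos : ∀ᵐ t ∂μ, 0 < r t)
    (hl : l = atBot ∨ l = atTop) (hf : MemMaxDomain μ Φ r q f f1 h)
    (hg : MemMaxDomain μ Φ r q g g1 k) {w : ℂ} (hw : Tendsto (Wr f f1 g g1) l (𝓝 w)) (hw0 : w ≠ 0)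
    (hu : IsSolution μ Φ r q z 0 u u1) : SquareIntegrableAt (weightedMeasure μ r) l u := by
  have := isLocallyFiniteMeasure_weightedMeasure hr
  have : l.NeBot := by rcases hl with rfl | rfl <;> infer_instance
  obtain ⟨s, hbasis, hord, hempty⟩ := exists_hasAntitoneBasis_ordConnected hl
  set G := lpNorm f 2 (weightedMeasure μ r) + lpNorm g 2 (weightedMeasure μ r)
  have hG : 0 ≤ G := add_nonneg lpNorm_nonneg lpNorm_nonneg
  set δ := ‖w‖ / 2
  have hδ : 0 < δ := half_pos (norm_pos_iff.mpr hw0)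
  set ε := δ / (2 * (G + 1))
  have hε : 0 < ε := by positivity
  have hGε : 2 * G * ε ≤ δ := by
    rw [mul_div_assoc', div_le_iff₀ (by positivity)]
    nlinarith
  have hsmall (φ : ℝ → ℂ) (hφ : MemLp φ 2 (weightedMeasure μ r)) :
      ∀ᶠ n in atTop, lpNorm φ 2 ((weightedMeasure μ r).restrict (s n)) ≤ ε :=
    (tendsto_lpNorm_restrict hbasis.antitone (fun n ↦ (hord n).measurableSet) hempty
      hφ).eventually_le_const hε
  obtain ⟨i, hi⟩ := hbasis.mem_iff.mp
    (hw.norm.eventually_const_le (half_lt_self (norm_pos_iff.mpr hw0)))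
  obtain ⟨n, hfn, hgn, hin⟩ := ((hsmall _ (hf.memLp_sub z)).and ((hsmall _ (hg.memLp_sub z)).and
    (eventually_ge_atTop i))).exists
  obtain ⟨c, hc⟩ := l.nonempty_of_mem (hbasis.mem n)
  refine squareIntegrableAt_of_lpNorm_le hl (IsRegularPair.continuous hu) (c := c)
    (C := 2 * (‖Wr u u1 f f1 c‖ + ‖Wr u u1 g g1 c‖) * G / δ) ?_
  filter_upwards [hbasis.mem n] with x hx
  have hsub : uIoc c x ⊆ s n := uIoc_subset_uIcc.trans ((hord n).uIcc_subset hc hx)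
  rw [le_div_iff₀' hδ]
  exact hf.mul_lpNorm_le hr hrpos hg hu hsub hδ.le
    (fun t ht ↦ hi (hbasis.antitone hin (hsub ht))) (le_add_of_nonneg_right (norm_nonneg _))
    (le_add_of_nonneg_left (norm_nonneg _)) hfn hgn hGε

end MemMaxDomain

end MaximalDomain

section Gluing

variable {μ : Measure ℝ} {Φ g u u1 v v1 w w1 : ℝ → ℂ} {r q : ℝ → ℝ} {z : ℂ} {α β : ℝ}

lemma isSolution_zero : IsSolution μ Φ r q z 0 0 0 where
  locallyIntegrable_density := by simpa using locallyIntegrable_zero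
  locallyIntegrable_deriv := by simpa using locallyIntegrable_zero
  isPrimitive_left c x := by simp
  isPrimitive_right c x := by simp

/-- The values at `β` of the solutions of `(ℓ - z) f = g` that vanish at `α`, where `g` runs
through the square integrable functions supported between `α` and `β`. -/
def reachableValues (μ : Measure ℝ) (Φ : ℝ → ℂ) (r q : ℝ → ℝ) (z : ℂ) (α β : ℝ) :
    Submodule ℂ (ℂ × ℂ) where
  carrier := {y | ∃ g f f1, MemLp g 2 (weightedMeasure μ r) ∧ (∀ t ∉ uIoc α β, g t = 0) ∧
    IsSolution μ Φ r q z g f f1 ∧ (f α, f1 α) = 0 ∧ (f β, f1 β) = y}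
  add_mem' := by
    rintro _ _ ⟨g, f, f1, hg, hg0, hf, hα, rfl⟩ ⟨k, e, e1, hk, hk0, he, hα', rfl⟩
    simp only [Prod.mk_eq_zero] at hα hα'
    exact ⟨_, _, _, hg.add (hk.const_mul 1), fun t ht ↦ by simp [hg0 t ht, hk0 t ht],
      hf.add_const_mul he 1, by simp [hα, hα'], by simp⟩
  zero_mem' := ⟨0, 0, 0, MemLp.zero, fun _ _ ↦ rfl, isSolution_zero, rfl, rfl⟩
  smul_mem' := by
    rintro a _ ⟨g, f, f1, hg, hg0, hf, hα, rfl⟩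
    simp only [Prod.mk_eq_zero] at hα
    exact ⟨_, _, _, MemLp.zero.add (hg.const_mul a), fun t ht ↦ by simp [hg0 t ht],
      isSolution_zero.add_const_mul hf a, by simp [hα], by simp⟩

/-- A solution of `(ℓ - z) v = 0` that vanishes almost everywhere between `α` and `β` has zero
initial values at `β`. -/
def DeterminesSolutions (μ : Measure ℝ) (Φ : ℝ → ℂ) (r q : ℝ → ℝ) (z : ℂ) (α β : ℝ) : Prop :=
  ∀ v v1, IsSolution μ Φ r q z 0 v v1 → (∀ᵐ t ∂μ, t ∈ uIoc α β → v t = 0) → v β = 0 ∧ v1 β = 0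

variable [IsLocallyFiniteMeasure μ]

lemma memLp_indicator_conj (hr : LocallyIntegrable r μ) (hv : Continuous v) (α β : ℝ) :
    MemLp ((uIoc α β).indicator fun t ↦ starRingEnd ℂ (v t)) 2 (weightedMeasure μ r) := by
  have := isLocallyFiniteMeasure_weightedMeasure hr
  exact (memLp_indicator_iff_restrict measurableSet_uIoc).mpr
    (memLp_restrict_uIoc_of_continuous (Complex.continuous_conj.comp hv) 2 α β)

lemma ae_eq_zero_of_wr_eq_zero (hr : LocallyIntegrable r μ) (hrpos : ∀ᵐ t ∂μ, 0 < r t)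
    (hw : IsSolution μ Φ r q z ((uIoc α β).indicator fun t ↦ starRingEnd ℂ (v t)) w w1)
    (hv : IsSolution μ Φ r q z 0 v v1) (hα : Wr w w1 v v1 α = 0) (hβ : Wr w w1 v v1 β = 0) :
    ∀ᵐ t ∂μ, t ∈ uIoc α β → v t = 0 := by
  have hloc := isLocallyFiniteMeasure_weightedMeasure hr
  set m := weightedMeasure μ r
  have hv_mem : MemLp v 2 (m.restrict (uIoc α β)) :=
    memLp_restrict_uIoc_of_continuous (IsRegularPair.continuous hv) 2 α β
  have hint : ∫ t in uIoc α β, ‖v t‖ ^ 2 ∂m = 0 := by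
    have hwr := hw.wr_eq_of_homogeneous hr hrpos hv α β
    rw [hα, hβ, zero_add, intervalIntegral.intervalIntegral_eq_integral_uIoc, eq_comm,
      smul_eq_zero, or_iff_right (by split_ifs <;> norm_num),
      setIntegral_congr_fun (g := fun t ↦ ((‖v t‖ ^ 2 : ℝ) : ℂ)) measurableSet_uIoc
        fun t ht ↦ by simp only [indicator_of_mem ht, Complex.conj_mul', Complex.ofReal_pow],
      integral_complex_ofReal, Complex.ofReal_eq_zero] at hwr
    exact hwr
  rw [integral_eq_zero_iff_of_nonneg (fun t ↦ by positivity) hv_mem.norm.integrable_sq,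
    EventuallyEq, ae_restrict_iff' measurableSet_uIoc] at hint
  exact ae_of_ae_weightedMeasure hr hrpos (hint.mono fun t ht hmem ↦ by simpa using ht hmem)

/-- A functional vanishing on the reachable values is `w ↦ W(w, v)(β)` for a solution `v`. Steering
with `g = conj v` shows that `v` vanishes between `α` and `β`, hence so does the functional. -/
theorem reachableValues_eq_top (hΦ : LocallyIntegrable Φ volume) (hr : LocallyIntegrable r μ)
    (hrpos : ∀ᵐ t ∂μ, 0 < r t) (hq : LocallyIntegrable q μ)
    (hdet : DeterminesSolutions μ Φ r q z α β) : reachableValues μ Φ r q z α β = ⊤ := by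
  by_contra hne
  obtain ⟨φ, hφ0, hφ⟩ := Submodule.exists_le_ker_of_lt_top _ (lt_top_iff_ne_top.mpr hne)
  have hφ_eq (a b : ℂ) : φ (a, b) = a * φ (1, 0) + b * φ (0, 1) := by
    rw [← smul_eq_mul, ← smul_eq_mul, ← map_smul, ← map_smul, ← map_add]
    simp
  obtain ⟨v, v1, hv, hvβ, hv1β⟩ := exists_isSolution hΦ hr hq
    (by simpa using locallyIntegrable_zero) z (g := 0) β (φ (0, 1)) (-φ (1, 0))
  have hv_cont := IsRegularPair.continuous hv
  have hrv : LocallyIntegrable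
      (fun t ↦ r t * (uIoc α β).indicator (fun t ↦ starRingEnd ℂ (v t)) t) μ :=
    (((locallyIntegrable_ofReal hr).mul_continuous (Complex.continuous_conj.comp hv_cont)).indicator
      measurableSet_uIoc).congr (ae_of_all _ fun t ↦ indicator_mul_right _ (fun t ↦ (r t : ℂ)) _)
  obtain ⟨w, w1, hw, hwα, hw1α⟩ := exists_isSolution hΦ hr hq hrv z α 0 0
  have hmem : (w β, w1 β) ∈ reachableValues μ Φ r q z α β :=
    ⟨_, w, w1, memLp_indicator_conj hr hv_cont α β, fun t ht ↦ indicator_of_notMem ht _, hw,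
      by simp [hwα, hw1α], rfl⟩
  have hφw : φ (w β, w1 β) = 0 := hφ hmem
  rw [hφ_eq] at hφw
  have hzero := hdet v v1 hv (ae_eq_zero_of_wr_eq_zero hr hrpos hw hv (by simp [Wr, hwα, hw1α])
    (by rw [Wr, hvβ, hv1β]; linear_combination -hφw))
  rw [hvβ, hv1β, neg_eq_zero] at hzero
  exact hφ0 (LinearMap.ext fun y ↦ by rw [← Prod.mk.eta (p := y), hφ_eq]; simp [hzero])

/-- Naimark's patching. -/
theorem exists_isSolution_glue (hΦ : LocallyIntegrable Φ volume) (hr : LocallyIntegrable r μ)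
    (hrpos : ∀ᵐ t ∂μ, 0 < r t) (hq : LocallyIntegrable q μ)
    (hdet : DeterminesSolutions μ Φ r q z α β) (hu : IsSolution μ Φ r q z 0 u u1) :
    ∃ g f f1, MemLp g 2 (weightedMeasure μ r) ∧ IsSolution μ Φ r q z g f f1 ∧
      (∀ x, Disjoint (uIoc α x) (uIoc α β) → f x = u x ∧ f1 x = u1 x) ∧
      ∀ x, Disjoint (uIoc β x) (uIoc α β) → f x = 0 := by
  have hmem : (-u β, -u1 β) ∈ reachableValues μ Φ r q z α β := by
    rw [reachableValues_eq_top hΦ hr hrpos hq hdet]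
    exact Submodule.mem_top
  obtain ⟨g, w, w1, hg, hg0, hw, hα, hβ⟩ := hmem
  simp only [Prod.mk_eq_zero, Prod.mk.injEq] at hα hβ
  have hf := hw.add_const_mul hu 1
  refine ⟨_, _, _, by simpa using hg, hf, fun x hx ↦ ?_, fun x hx ↦ ?_⟩
  · exact hf.eq_of_eq hΦ hr hq hu (c := α) (fun t ht ↦ by simp [hg0 t (disjoint_left.mp hx ht)])
      (by simp [hα]) (by simp [hα])
  · exact (hf.eq_zero hΦ hr hq (c := β) (fun t ht ↦ by simp [hg0 t (disjoint_left.mp hx ht)])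
      (by simp [hβ]) (by simp [hβ])).1

omit [IsLocallyFiniteMeasure μ] in
lemma MemMaxDomain.of_isSolution (hrpos : ∀ᵐ t ∂μ, 0 < r t)
    (hg : MemLp g 2 (weightedMeasure μ r)) (hu : IsSolution μ Φ r q z g u u1)
    (hu_mem : MemLp u 2 (weightedMeasure μ r)) :
    MemMaxDomain μ Φ r q u u1 fun t ↦ ((q t : ℂ) - z * r t) * u t - r t * g t where
  isRegularPair := hu
  memLp := hu_mem
  memLp_ellApply := (memLp_congr_ae (IsSolution.ellApply_eq hrpos q z g u)).mpr
    ((hu_mem.const_mul z).add hg)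

theorem exists_memMaxDomain_eq_of_le (hΦ : LocallyIntegrable Φ volume) (hr : LocallyIntegrable r μ)
    (hrpos : ∀ᵐ t ∂μ, 0 < r t) (hq : LocallyIntegrable q μ)
    (hdet : DeterminesSolutions μ Φ r q z α β) (hαβ : α ≤ β) (hu : IsSolution μ Φ r q z 0 u u1)
    (hu_bot : SquareIntegrableAt (weightedMeasure μ r) atBot u) :
    ∃ f f1, (∃ h, MemMaxDomain μ Φ r q f f1 h) ∧ ∀ x ≤ α, f x = u x ∧ f1 x = u1 x := by
  have := isLocallyFiniteMeasure_weightedMeasure hr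
  obtain ⟨g, f, f1, hg, hf, hfu, hf0⟩ := exists_isSolution_glue hΦ hr hrpos hq hdet hu
  rw [uIoc_of_le hαβ] at hfu hf0
  replace hfu (x : ℝ) (hx : x ≤ α) : f x = u x ∧ f1 x = u1 x :=
    hfu x (uIoc_of_ge hx ▸ Ioc_disjoint_Ioc_of_le le_rfl)
  replace hf0 (x : ℝ) (hx : β ≤ x) : f x = 0 :=
    hf0 x (uIoc_of_le hx ▸ (Ioc_disjoint_Ioc_of_le le_rfl).symm)
  exact ⟨f, f1, ⟨_, .of_isSolution hrpos hg hf (memLp_two_of_squareIntegrableAt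
    (IsRegularPair.continuous hf)
    (hu_bot.congr ((eventually_le_atBot α).mono fun x hx ↦ (hfu x hx).1))
    (squareIntegrableAt_zero.congr ((eventually_ge_atTop β).mono hf0)))⟩, hfu⟩

theorem exists_memMaxDomain_eq_of_ge (hΦ : LocallyIntegrable Φ volume) (hr : LocallyIntegrable r μ)
    (hrpos : ∀ᵐ t ∂μ, 0 < r t) (hq : LocallyIntegrable q μ)
    (hdet : DeterminesSolutions μ Φ r q z α β) (hβα : β ≤ α) (hu : IsSolution μ Φ r q z 0 u u1)
    (hu_top : SquareIntegrableAt (weightedMeasure μ r) atTop u) :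
    ∃ f f1, (∃ h, MemMaxDomain μ Φ r q f f1 h) ∧ ∀ x, α ≤ x → f x = u x ∧ f1 x = u1 x := by
  have := isLocallyFiniteMeasure_weightedMeasure hr
  obtain ⟨g, f, f1, hg, hf, hfu, hf0⟩ := exists_isSolution_glue hΦ hr hrpos hq hdet hu
  rw [uIoc_of_ge hβα] at hfu hf0
  replace hfu (x : ℝ) (hx : α ≤ x) : f x = u x ∧ f1 x = u1 x :=
    hfu x (uIoc_of_le hx ▸ (Ioc_disjoint_Ioc_of_le le_rfl).symm)
  replace hf0 (x : ℝ) (hx : x ≤ β) : f x = 0 :=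
    hf0 x (uIoc_of_ge hx ▸ Ioc_disjoint_Ioc_of_le le_rfl)
  exact ⟨f, f1, ⟨_, .of_isSolution hrpos hg hf (memLp_two_of_squareIntegrableAt
    (IsRegularPair.continuous hf)
    (squareIntegrableAt_zero.congr ((eventually_le_atBot β).mono hf0))
    (hu_top.congr ((eventually_ge_atTop α).mono fun x hx ↦ (hfu x hx).1)))⟩, hfu⟩

end Gluing

section BoundaryForm

variable {μ : Measure ℝ} {Φ : ℝ → ℂ} {r q : ℝ → ℝ} {l F : Filter ℝ}

/-- `F` approaches the endpoint of the time scale that corresponds to the end `l` of the real line.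
If that endpoint is finite, `F` need not converge to `l`, but then `L²` near `l` is no condition. -/
structure IsBoundaryFilter (μ : Measure ℝ) (Φ : ℝ → ℂ) (r q : ℝ → ℝ) (l F : Filter ℝ) : Prop where
  eq_atBot_or_eq_atTop : l = atBot ∨ l = atTop
  neBot : F.NeBot
  squareIntegrableAt_or_le :
    (∀ u, Continuous u → SquareIntegrableAt (weightedMeasure μ r) l u) ∨ F ≤ l
  exists_memMaxDomain : ∀ z u u1, IsSolution μ Φ r q z 0 u u1 →
    SquareIntegrableAt (weightedMeasure μ r) l u →
    ∃ f f1, (∃ h, MemMaxDomain μ Φ r q f f1 h) ∧ ∀ᶠ x in F, f x = u x ∧ f1 x = u1 x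

namespace IsBoundaryFilter

variable [IsLocallyFiniteMeasure μ]

lemma squareIntegrableAt (hF : IsBoundaryFilter μ Φ r q l F) (hr : LocallyIntegrable r μ)
    (hrpos : ∀ᵐ t ∂μ, 0 < r t) {f f1 g g1 : ℝ → ℂ} (hf : ∃ h, MemMaxDomain μ Φ r q f f1 h)
    (hg : ∃ h, MemMaxDomain μ Φ r q g g1 h) (hfg : ¬ Tendsto (Wr f f1 g g1) F (𝓝 0))
    {z : ℂ} {u u1 : ℝ → ℂ} (hu : IsSolution μ Φ r q z 0 u u1) :
    SquareIntegrableAt (weightedMeasure μ r) l u := by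
  rcases hF.squareIntegrableAt_or_le with hall | hle
  · exact hall u (IsRegularPair.continuous hu)
  · obtain ⟨⟨h, hf⟩, k, hg⟩ := And.intro hf hg
    obtain ⟨w, hw⟩ := hf.exists_tendsto_wr hr hrpos hF.eq_atBot_or_eq_atTop hg
    have hw0 : w ≠ 0 := by
      rintro rfl
      exact hfg (hw.mono_left hle)
    exact hf.squareIntegrableAt_of_tendsto_wr hr hrpos hF.eq_atBot_or_eq_atTop hg hw hw0 hu

lemma exists_tendsto_wr_one (hF : IsBoundaryFilter μ Φ r q l F) (hΦ : LocallyIntegrable Φ volume)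
    (hr : LocallyIntegrable r μ) (hrpos : ∀ᵐ t ∂μ, 0 < r t) (hq : LocallyIntegrable q μ) {z : ℂ}
    (hz : ∀ u u1, IsSolution μ Φ r q z 0 u u1 → SquareIntegrableAt (weightedMeasure μ r) l u) :
    ∃ u u1 f f1 g g1, (IsSolution μ Φ r q z 0 u u1 ∧ u 0 = 1 ∧ u1 0 = 0) ∧
      (∀ᶠ x in F, f x = u x ∧ f1 x = u1 x) ∧ (∃ h, MemMaxDomain μ Φ r q f f1 h) ∧
      (∃ h, MemMaxDomain μ Φ r q g g1 h) ∧ Tendsto (Wr f f1 g g1) F (𝓝 1) := by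
  obtain ⟨u, u1, v, v1, hu, hv, hu₀, hwr⟩ := exists_isSolution_wr_eq_one hΦ hr hrpos hq z
  obtain ⟨f, f1, hf, hfu⟩ := hF.exists_memMaxDomain z u u1 hu (hz u u1 hu)
  obtain ⟨g, g1, hg, hgv⟩ := hF.exists_memMaxDomain z v v1 hv (hz v v1 hv)
  refine ⟨u, u1, f, f1, g, g1, ⟨hu, hu₀⟩, hfu, hf, hg, tendsto_const_nhds.congr' ?_⟩
  filter_upwards [hfu, hgv] with x hfx hgx
  rw [← hwr x, Wr, Wr, hfx.1, hfx.2, hgx.1, hgx.2]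

theorem limitPoint_iff (hF : IsBoundaryFilter μ Φ r q l F) (hΦ : LocallyIntegrable Φ volume)
    (hr : LocallyIntegrable r μ) (hrpos : ∀ᵐ t ∂μ, 0 < r t) (hq : LocallyIntegrable q μ) :
    (∀ z, ∃ u u1, IsSolution μ Φ r q z 0 u u1 ∧
        ¬ SquareIntegrableAt (weightedMeasure μ r) l u) ↔
      ∀ f f1 g g1, (∃ h, MemMaxDomain μ Φ r q f f1 h) → (∃ h, MemMaxDomain μ Φ r q g g1 h) →
        Tendsto (Wr f f1 g g1) F (𝓝 0) := by
  have := hF.neBot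
  refine ⟨fun hlp f f1 g g1 hf hg ↦ by_contra fun hfg ↦ ?_, fun hwr z ↦ by_contra fun hz ↦ ?_⟩
  · obtain ⟨u, u1, hu, hu_not⟩ := hlp 0
    exact hu_not (hF.squareIntegrableAt hr hrpos hf hg hfg hu)
  · push Not at hz
    obtain ⟨-, -, f, f1, g, g1, -, -, hf, hg, hone⟩ := hF.exists_tendsto_wr_one hΦ hr hrpos hq hz
    exact zero_ne_one (tendsto_nhds_unique (hwr f f1 g g1 hf hg) hone)

theorem limitCircle_iff (hF : IsBoundaryFilter μ Φ r q l F) (hΦ : LocallyIntegrable Φ volume)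
    (hΦreal : ∀ t, starRingEnd ℂ (Φ t) = Φ t) (hr : LocallyIntegrable r μ)
    (hrpos : ∀ᵐ t ∂μ, 0 < r t) (hq : LocallyIntegrable q μ) :
    (∀ z u u1, IsSolution μ Φ r q z 0 u u1 → SquareIntegrableAt (weightedMeasure μ r) l u) ↔
      ∃ f f1, (∃ h, MemMaxDomain μ Φ r q f f1 h) ∧
        Tendsto (Wr f f1 (fun t ↦ starRingEnd ℂ (f t)) fun t ↦ starRingEnd ℂ (f1 t)) F (𝓝 0) ∧
        ∃ g g1, (∃ h, MemMaxDomain μ Φ r q g g1 h) ∧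
          ∃ w, w ≠ 0 ∧ Tendsto (Wr f f1 g g1) F (𝓝 w) := by
  have := hF.neBot
  constructor
  · intro hlc
    obtain ⟨u, u1, f, f1, g, g1, ⟨hu, hu₀, hu1₀⟩, hfu, hf, hg, hone⟩ :=
      hF.exists_tendsto_wr_one hΦ hr hrpos hq (hlc 0)
    refine ⟨f, f1, hf, tendsto_const_nhds.congr' ?_, g, g1, hg, 1, one_ne_zero, hone⟩
    filter_upwards [hfu] with x hfx
    have hreal := hu.conj_eq_self hΦ hr hq hΦreal (c := 0) (by simp [hu₀]) (by simp [hu1₀]) x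
    rw [Wr, hfx.1, hfx.2, hreal.1, hreal.2]
    ring
  · rintro ⟨f, f1, hf, -, g, g1, hg, w, hw0, hw⟩ z u u1 hu
    exact hF.squareIntegrableAt hr hrpos hf hg
      (fun hzero ↦ hw0 (tendsto_nhds_unique hw hzero)) hu

end IsBoundaryFilter

end BoundaryForm

section TimeScale

variable {T K : Set ℝ} {μ ν : Measure ℝ} {p : ℝ → ℝ} {s x y c d : ℝ}

lemma tsSigma_le (hs : s ∈ K) (hxs : x < s) : tsSigma K x ≤ s := by
  rw [tsSigma, if_pos ⟨s, hs, hxs⟩]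
  exact csInf_le ⟨x, fun y hy ↦ hy.2.le⟩ ⟨hs, hxs⟩

lemma le_tsSigma_of_lt (hs : s ∈ K) (hxs : x < s) : x ≤ tsSigma K x := by
  rw [tsSigma, if_pos ⟨s, hs, hxs⟩]
  exact le_csInf ⟨s, hs, hxs⟩ fun y hy ↦ hy.2.le

lemma le_tsSigma_of_mem (hx : x ∈ K) : x ≤ tsSigma K x := by
  by_cases h : {s | s ∈ K ∧ x < s}.Nonempty
  · obtain ⟨s, hs, hxs⟩ := h
    exact le_tsSigma_of_lt hs hxs
  · rw [tsSigma, if_neg h]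
    exact le_csSup ⟨x, fun y hy ↦ not_lt.1 fun hxy ↦ h ⟨y, hy, hxy⟩⟩ hx

lemma tsSigma_congr (h : ∀ s ∈ K, x < s ↔ y < s) : tsSigma K x = tsSigma K y := by
  have hset : {s | s ∈ K ∧ x < s} = {s | s ∈ K ∧ y < s} :=
    Set.ext fun s ↦ and_congr_right fun hs ↦ h s hs
  unfold tsSigma
  rw [hset]

lemma tsKappa_subset : tsKappa T ⊆ T := by
  unfold tsKappa
  split_ifs
  exacts [sdiff_subset, subset_rfl]

lemma mem_tsKappa_of_lt (hx : x ∈ T) (hs : s ∈ T) (hsx : s < x) : x ∈ tsKappa T := by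
  unfold tsKappa
  split_ifs with h
  · exact ⟨hx, ((csInf_le h.1 hs).trans_lt hsx).ne'⟩
  · exact hx

lemma isClosed_tsKappa (hT : IsClosed T) : IsClosed (tsKappa T) := by
  unfold tsKappa
  split_ifs with h
  · have hcut : T \ {sInf T} = T ∩ Ici (tsSigma T (sInf T)) := by
      ext s
      refine and_congr_right fun hs ↦ ⟨fun hne ↦ ?_, fun hle ↦ (h.2.trans_le hle).ne'⟩
      exact tsSigma_le hs (lt_of_le_of_ne (csInf_le h.1 hs) (Ne.symm hne))
    rw [hcut]
    exact hT.inter isClosed_Ici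
  · exact hT

/-- `μ` is the Lebesgue–Stieltjes measure `dσ` of the forward shift of `K`. -/
def IsForwardShiftMeasure (K : Set ℝ) (μ : Measure ℝ) : Prop :=
  ∀ c d, c ≤ d → μ (Ioc c d) = ENNReal.ofReal (tsSigma K d - tsSigma K c)

/-- `ν` is the Lebesgue–Stieltjes measure `dρ` of the backward shift of `T`; the intervals are
half-open on the right because `ρ` is left-continuous. -/
def IsBackwardShiftMeasure (T : Set ℝ) (ν : Measure ℝ) : Prop :=
  ∀ c d, c ≤ d → ν (Ico c d) = ENNReal.ofReal (tsRho T d - tsRho T c)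

lemma IsForwardShiftMeasure.isLocallyFiniteMeasure (hμ : IsForwardShiftMeasure K μ) :
    IsLocallyFiniteMeasure μ := by
  refine ⟨fun x ↦ ⟨Ioc (x - 1) (x + 1), Ioc_mem_nhds (by linarith) (by linarith), ?_⟩⟩
  rw [hμ _ _ (by linarith)]
  exact ENNReal.ofReal_lt_top

lemma IsBackwardShiftMeasure.isLocallyFiniteMeasure (hν : IsBackwardShiftMeasure T ν) :
    IsLocallyFiniteMeasure ν := by
  refine ⟨fun x ↦ ⟨Ico (x - 1) (x + 1), Ico_mem_nhds (by linarith) (by linarith), ?_⟩⟩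
  rw [hν _ _ (by linarith)]
  exact ENNReal.ofReal_lt_top

lemma IsForwardShiftMeasure.measure_compl_eq_zero (hμ : IsForwardShiftMeasure K μ)
    (hK : IsClosed K) : μ Kᶜ = 0 := by
  refine measure_null_of_locally_null _ fun x hx ↦ ?_
  obtain ⟨ε, hε, hball⟩ := Metric.isOpen_iff.1 hK.isOpen_compl x hx
  refine ⟨Ioc (x - ε / 2) (x + ε / 2),
    mem_nhdsWithin_of_mem_nhds (Ioc_mem_nhds (by linarith) (by linarith)), ?_⟩
  rw [hμ _ _ (by linarith), tsSigma_congr (x := x + ε / 2) (y := x - ε / 2), sub_self,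
    ENNReal.ofReal_zero]
  refine fun s hs ↦ ⟨fun h ↦ by linarith, fun h ↦ not_le.1 fun hle ↦ hball (a := s) ?_ hs⟩
  rw [Real.ball_eq_Ioo]
  constructor <;> linarith

lemma le_tsRho (hs : s ∈ T) (hsc : s < c) : s ≤ tsRho T c := by
  rw [tsRho, if_pos ⟨s, hs, hsc⟩]
  exact le_csSup (s := {s | s ∈ T ∧ s < c}) ⟨c, fun y hy ↦ hy.2.le⟩ ⟨hs, hsc⟩

lemma tsRho_le (hs : s ∈ T) (hsx : s ≤ x) (h : ∀ y ∈ T, y < c → y ≤ x) : tsRho T c ≤ x := by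
  unfold tsRho
  split_ifs with hc
  · exact csSup_le hc fun y hy ↦ h y hy.1 hy.2
  · exact (csInf_le ⟨c, fun y hy ↦ not_lt.1 fun hyc ↦ hc ⟨y, hy, hyc⟩⟩ hs).trans hsx

lemma exists_mem_lt_of_tsRho_lt (hT : T.Nonempty) (hx : tsRho T c < x) : ∃ s ∈ T, s < x := by
  by_cases hc : {s | s ∈ T ∧ s < c}.Nonempty
  · obtain ⟨s, hs, hsc⟩ := hc
    exact ⟨s, hs, (le_tsRho hs hsc).trans_lt hx⟩
  · rw [tsRho, if_neg hc] at hx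
    exact exists_lt_of_csInf_lt hT hx

lemma exists_mem_Ioo_of_mem_Ioo_tsRho (hcd : c ≤ d) (hx : x ∈ Ioo (tsRho T c) (tsRho T d)) :
    ∃ s ∈ T, s ∈ Ioo x d := by
  obtain ⟨hcx, hxd⟩ := hx
  by_cases hd : {s | s ∈ T ∧ s < d}.Nonempty
  · rw [tsRho, if_pos hd] at hxd
    obtain ⟨s, ⟨hs, hsd⟩, hxs⟩ := exists_lt_of_lt_csSup hd hxd
    exact ⟨s, hs, hxs, hsd⟩
  · have hc : ¬ {s | s ∈ T ∧ s < c}.Nonempty := fun ⟨s, hs, hsc⟩ ↦ hd ⟨s, hs, hsc.trans_le hcd⟩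
    rw [tsRho, if_neg hd] at hxd
    rw [tsRho, if_neg hc] at hcx
    exact absurd (hcx.trans hxd) (lt_irrefl _)

/-- The first point of `T` at or after `x`; it maps Lebesgue measure on `tsSpan T` to `dρ`. As for
`tsSigma`, the value beyond the last point of `T` is `sSup T`. -/
noncomputable def tsCeil (T : Set ℝ) (x : ℝ) : ℝ :=
  if {s | s ∈ T ∧ x ≤ s}.Nonempty then sInf {s | s ∈ T ∧ x ≤ s} else sSup T

/-- The interval spanned by `T`, without its left endpoint. -/
def tsSpan (T : Set ℝ) : Set ℝ := {x | (∃ s ∈ T, s < x) ∧ ∃ s ∈ T, x ≤ s}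

lemma measurableSet_tsSpan : MeasurableSet (tsSpan T) := by
  refine OrdConnected.measurableSet ⟨?_⟩
  rintro x ⟨⟨s, hs, hsx⟩, -⟩ y ⟨-, t, ht, hyt⟩ z hz
  exact ⟨⟨s, hs, hsx.trans_le hz.1⟩, t, ht, hz.2.trans hyt⟩

lemma tsCeil_le (hs : s ∈ T) (hxs : x ≤ s) : tsCeil T x ≤ s := by
  rw [tsCeil, if_pos ⟨s, hs, hxs⟩]
  exact csInf_le ⟨x, fun y hy ↦ hy.2⟩ ⟨hs, hxs⟩

lemma tsCeil_mem_inter_Ici (hT : IsClosed T) (hs : s ∈ T) (hxs : x ≤ s) :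
    tsCeil T x ∈ T ∩ Ici x := by
  rw [tsCeil, if_pos ⟨s, hs, hxs⟩]
  exact (hT.inter isClosed_Ici).csInf_mem ⟨s, hs, hxs⟩ ⟨x, fun y hy ↦ hy.2⟩

lemma tsCeil_eq_sSup (h : ∀ s ∈ T, s < x) : tsCeil T x = sSup T :=
  if_neg fun ⟨s, hs, hxs⟩ ↦ (h s hs).not_ge hxs

lemma monotone_tsCeil (hT : IsClosed T) : Monotone (tsCeil T) := by
  intro x y hxy
  by_cases hy : ∃ s ∈ T, y ≤ s
  · obtain ⟨s, hs, hys⟩ := hy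
    obtain ⟨hmem, hle⟩ := tsCeil_mem_inter_Ici hT hs hys
    exact tsCeil_le hmem (hxy.trans hle)
  · push Not at hy
    rw [tsCeil_eq_sSup hy]
    by_cases hx : ∃ s ∈ T, x ≤ s
    · obtain ⟨s, hs, hxs⟩ := hx
      exact (tsCeil_le hs hxs).trans (le_csSup ⟨y, fun z hz ↦ (hy z hz).le⟩ hs)
    · push Not at hx
      rw [tsCeil_eq_sSup hx]

lemma Ioo_tsRho_subset (hT : IsClosed T) (hcd : c ≤ d) :
    Ioo (tsRho T c) (tsRho T d) ⊆ tsCeil T ⁻¹' Ico c d ∩ tsSpan T := by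
  intro x hx
  obtain ⟨s, hs, hxs, hsd⟩ := exists_mem_Ioo_of_mem_Ioo_tsRho hcd hx
  obtain ⟨hmem, hle⟩ := tsCeil_mem_inter_Ici hT hs hxs.le
  refine ⟨⟨not_lt.1 fun hlt ↦ ?_, (tsCeil_le hs hxs.le).trans_lt hsd⟩,
    exists_mem_lt_of_tsRho_lt ⟨s, hs⟩ hx.1, s, hs, hxs.le⟩
  exact (hx.1.trans_le hle).not_ge (le_tsRho hmem hlt)

lemma preimage_tsCeil_Ico_inter_tsSpan_subset (hT : IsClosed T) :
    tsCeil T ⁻¹' Ico c d ∩ tsSpan T ⊆ Icc (tsRho T c) (tsRho T d) := by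
  rintro x ⟨⟨hc, hd⟩, ⟨s, hs, hsx⟩, t, ht, hxt⟩
  obtain ⟨hmem, hle⟩ := tsCeil_mem_inter_Ici hT ht hxt
  refine ⟨tsRho_le hs hsx.le fun y hy hyc ↦ not_lt.1 fun hxy ↦ ?_, hle.trans (le_tsRho hmem hd)⟩
  exact (hyc.trans_le hc).not_ge (tsCeil_le hy hxy.le)

lemma IsBackwardShiftMeasure.eq_map_tsCeil (hν : IsBackwardShiftMeasure T ν) (hT : IsClosed T) :
    ν = (volume.restrict (tsSpan T)).map (tsCeil T) := by
  have := hν.isLocallyFiniteMeasure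
  have hmeas : Measurable (tsCeil T) := (monotone_tsCeil hT).measurable
  refine Measure.ext_of_Ico _ _ fun c d hcd ↦ ?_
  rw [hν c d hcd.le, Measure.map_apply hmeas measurableSet_Ico,
    Measure.restrict_apply (hmeas measurableSet_Ico)]
  apply le_antisymm
  · rw [← Real.volume_Ioo]
    exact measure_mono (Ioo_tsRho_subset hT hcd.le)
  · rw [← Real.volume_Icc]
    exact measure_mono (preimage_tsCeil_Ico_inter_tsSpan_subset hT)

lemma extK_eq_comp_tsCeil (hT : IsClosed T) (p : ℝ → ℂ) (hx : x ∈ tsSpan T) :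
    extK T p x = p (tsCeil T x) := by
  obtain ⟨⟨s, hs, hsx⟩, t, ht, hxt⟩ := hx
  unfold extK
  split_ifs with hxK
  · rw [le_antisymm (tsCeil_le (tsKappa_subset hxK) le_rfl) (tsCeil_mem_inter_Ici hT ht hxt).2]
  · have hxT : x ∉ T := fun h ↦ hxK (mem_tsKappa_of_lt h hs hsx)
    have hset : {y | y ∈ tsKappa T ∧ x < y} = {y | y ∈ T ∧ x ≤ y} := by
      refine Set.ext fun y ↦ ⟨fun hy ↦ ⟨tsKappa_subset hy.1, hy.2.le⟩, fun hy ↦ ?_⟩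
      have hxy : x < y := lt_of_le_of_ne hy.2 fun h ↦ hxT (h ▸ hy.1)
      exact ⟨mem_tsKappa_of_lt hy.1 hs (hsx.trans hxy), hxy⟩
    rw [tsSigma, tsCeil, hset, if_pos ⟨t, ht, hxt⟩, if_pos ⟨t, ht, hxt⟩]

/-- The coefficient `1 / p̄` of the quasi-derivative in `u' = u^[1] / p̄`. -/
noncomputable def recipExt (T : Set ℝ) (p : ℝ → ℝ) (t : ℝ) : ℂ := 1 / extK T (cR p) t

lemma conj_recipExt (T : Set ℝ) (p : ℝ → ℝ) (t : ℝ) :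
    starRingEnd ℂ (recipExt T p t) = recipExt T p t := by
  unfold recipExt extK cR
  split_ifs <;> simp

lemma recipExt_eq_of_gap (hx : x ∉ tsKappa T) (hy : y ∉ tsKappa T)
    (h : ∀ s ∈ tsKappa T, x < s ↔ y < s) : recipExt T p x = recipExt T p y := by
  unfold recipExt extK
  rw [if_neg hx, if_neg hy, tsSigma_congr h]

lemma ae_recipExt_ne_zero (hT : IsClosed T) (hν : IsBackwardShiftMeasure T ν)
    (hp : ∀ᵐ t ∂ν, p t ≠ 0) : ∀ᵐ t ∂volume.restrict (tsSpan T), recipExt T p t ≠ 0 := by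
  rw [hν.eq_map_tsCeil hT] at hp
  filter_upwards [ae_of_ae_map (monotone_tsCeil hT).measurable.aemeasurable hp,
    ae_restrict_mem measurableSet_tsSpan] with t hpt ht
  rw [recipExt, extK_eq_comp_tsCeil hT _ ht]
  exact one_div_ne_zero (Complex.ofReal_ne_zero.2 hpt)

lemma integrableOn_recipExt_tsSpan (hT : IsClosed T) (hν : IsBackwardShiftMeasure T ν)
    (hp : LocallyIntegrable (fun t ↦ 1 / p t) ν) (c d : ℝ) :
    IntegrableOn (recipExt T p) (Ioc c d ∩ tsSpan T) := by
  have hmeas : Measurable (tsCeil T) := (monotone_tsCeil hT).measurable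
  have hp' := locallyIntegrable_ofReal hp
  rw [hν.eq_map_tsCeil hT] at hp'
  have himage := hp'.integrableOn_isCompact (isCompact_Icc (a := tsCeil T c) (b := tsCeil T d))
  rw [IntegrableOn, Measure.restrict_map hmeas measurableSet_Icc] at himage
  have hcomp := himage.comp_measurable hmeas
  rw [Measure.restrict_restrict (hmeas measurableSet_Icc)] at hcomp
  refine (IntegrableOn.mono_set hcomp fun x hx ↦
    ⟨⟨monotone_tsCeil hT hx.1.1.le, monotone_tsCeil hT hx.1.2⟩, hx.2⟩).congr_fun
    (fun x hx ↦ ?_) (measurableSet_Ioc.inter measurableSet_tsSpan)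
  simp [recipExt, extK_eq_comp_tsCeil hT _ hx.2, cR]

lemma integrableOn_recipExt_of_gap {S : Set ℝ} (hS : S.OrdConnected)
    (hdisj : ∀ x ∈ S, x ∉ tsKappa T) (hgap : ∀ x ∈ S, ∀ y ∈ S, ∀ s ∈ tsKappa T, x < s ↔ y < s)
    (p : ℝ → ℝ) (c d : ℝ) : IntegrableOn (recipExt T p) (Ioc c d ∩ S) := by
  obtain rfl | ⟨y, hy⟩ := S.eq_empty_or_nonempty
  · simp
  have hconst : IntegrableOn (fun _ ↦ recipExt T p y) (Ioc c d ∩ S) :=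
    IntegrableOn.mono_set (by simp) inter_subset_left
  exact hconst.congr_fun (fun x hx ↦ recipExt_eq_of_gap (hdisj y hy) (hdisj x hx.2)
    (hgap y hy x hx.2)) (measurableSet_Ioc.inter hS.measurableSet)

lemma eq_sInf_of_notMem_tsSpan (hx : x ∉ tsSpan T) (hlower : ¬ ∀ s ∈ T, x < s)
    (hupper : ¬ ∀ s ∈ T, s < x) : x = sInf T := by
  push Not at hlower hupper
  have hle : x ∈ lowerBounds T := fun s hs ↦ not_lt.1 fun hsx ↦ hx ⟨⟨s, hs, hsx⟩, hupper⟩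
  obtain ⟨s, hs, hsx⟩ := hlower
  obtain rfl : x = s := le_antisymm (hle hs) hsx
  exact le_antisymm (le_csInf ⟨x, hs⟩ hle) (csInf_le ⟨x, hle⟩ hs)

lemma locallyIntegrable_recipExt (hT : IsClosed T) (hν : IsBackwardShiftMeasure T ν)
    (hp : LocallyIntegrable (fun t ↦ 1 / p t) ν) : LocallyIntegrable (recipExt T p) volume := by
  have hbelow (c d : ℝ) : IntegrableOn (recipExt T p) (Ioc c d ∩ {x | ∀ s ∈ T, x < s}) := by
    refine integrableOn_recipExt_of_gap
      ⟨fun x _ y (hy : ∀ s ∈ T, y < s) z hz s hs ↦ hz.2.trans_lt (hy s hs)⟩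
      (fun x hx hxK ↦ (hx x (tsKappa_subset hxK)).false) (fun x hx y hy s hs ↦ ?_) p c d
    exact iff_of_true (hx s (tsKappa_subset hs)) (hy s (tsKappa_subset hs))
  have habove (c d : ℝ) : IntegrableOn (recipExt T p) (Ioc c d ∩ {x | ∀ s ∈ T, s < x}) := by
    refine integrableOn_recipExt_of_gap
      ⟨fun x (hx : ∀ s ∈ T, s < x) y _ z hz s hs ↦ (hx s hs).trans_le hz.1⟩
      (fun x hx hxK ↦ (hx x (tsKappa_subset hxK)).false) (fun x hx y hy s hs ↦ ?_) p c d
    exact iff_of_false (hx s (tsKappa_subset hs)).not_gt (hy s (tsKappa_subset hs)).not_gt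
  have hpoint : IntegrableOn (recipExt T p) {sInf T} := by simp
  refine locallyIntegrable_of_integrableOn_Ioc fun c d _ ↦
    (((integrableOn_recipExt_tsSpan hT hν hp c d).union (hbelow c d)).union
      ((habove c d).union hpoint)).mono_set fun x hx ↦ ?_
  by_cases hspan : x ∈ tsSpan T
  · exact .inl (.inl ⟨hx, hspan⟩)
  by_cases hlower : ∀ s ∈ T, x < s
  · exact .inl (.inr ⟨hx, hlower⟩)
  by_cases hupper : ∀ s ∈ T, s < x
  · exact .inr (.inl ⟨hx, hupper⟩)
  exact .inr (.inr (eq_sInf_of_notMem_tsSpan hspan hlower hupper))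

end TimeScale

section Nondegeneracy

variable {T K : Set ℝ} {μ : Measure ℝ} {p : ℝ → ℝ} {ψ V : ℝ → ℂ} {a b s t t' x y : ℝ}

lemma IsForwardShiftMeasure.measure_Ioc_pos (hμ : IsForwardShiftMeasure K μ) (hy : y ∈ K)
    (ht' : t' ∈ K) (hay : a < y) (hyb : y < b) (hbt' : b < t') : 0 < μ (Ioc a b) := by
  rw [hμ a b (hay.trans hyb).le, ENNReal.ofReal_pos, sub_pos]
  exact (tsSigma_le hy hay).trans_lt (hyb.trans_le (le_tsSigma_of_lt ht' hbt'))

lemma IsForwardShiftMeasure.eq_zero_of_ae_eq_zero (hμ : IsForwardShiftMeasure K μ)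
    (hV : Continuous V) (hzero : ∀ᵐ x ∂μ, x ∈ Ioc a b → V x = 0) (hy : y ∈ K) (ht' : t' ∈ K)
    (hay : a < y) (hyb : y < b) (hyt' : y < t') : V y = 0 := by
  by_contra hne
  have hopen : IsOpen ({x | V x ≠ 0} ∩ Ioo a (min b t')) :=
    (isOpen_ne.preimage hV).inter isOpen_Ioo
  obtain ⟨ε, hε, hball⟩ := Metric.isOpen_iff.1 hopen y ⟨hne, hay, lt_min hyb hyt'⟩
  have hsub : Ioc (y - ε / 2) (y + ε / 2) ⊆ {x | V x ≠ 0} ∩ Ioo a (min b t') := by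
    refine Subset.trans (fun x hx ↦ ?_) hball
    rw [Real.ball_eq_Ioo]
    constructor <;> linarith [hx.1, hx.2]
  have hright : y + ε / 2 < t' :=
    (hsub ⟨by linarith, le_rfl⟩).2.2.trans_le (min_le_right _ _)
  have hnull : μ (Ioc (y - ε / 2) (y + ε / 2)) = 0 := by
    refine measure_mono_null (fun x hx ↦ ?_) (ae_iff.1 hzero)
    obtain ⟨hVx, hxa, hxb⟩ := hsub hx
    exact fun hzx ↦ hVx (hzx ⟨hxa, hxb.le.trans (min_le_left _ _)⟩)
  exact (hμ.measure_Ioc_pos hy ht' (by linarith) (by linarith) hright).ne' hnull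

lemma exists_gap_of_notMem (hK : IsClosed K) (hs : s ∈ K) (ht : t ∈ K) (hx : x ∈ Icc s t)
    (hxK : x ∉ K) :
    ∃ c ∈ K, ∃ d ∈ K, s ≤ c ∧ c < x ∧ x < d ∧ d ≤ t ∧ ∀ y ∈ K, y ∉ Ioo c d := by
  have hbdd : BddAbove (K ∩ Icc s x) := ⟨x, fun y hy ↦ hy.2.2⟩
  have hbdd' : BddBelow (K ∩ Icc x t) := ⟨x, fun y hy ↦ hy.2.1⟩
  have hc := (hK.inter isClosed_Icc).csSup_mem ⟨s, hs, le_rfl, hx.1⟩ hbdd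
  have hd := (hK.inter isClosed_Icc).csInf_mem ⟨t, ht, hx.2, le_rfl⟩ hbdd'
  refine ⟨_, hc.1, _, hd.1, hc.2.1, lt_of_le_of_ne hc.2.2 fun h ↦ hxK (h ▸ hc.1),
    lt_of_le_of_ne hd.2.1 fun h ↦ hxK (h ▸ hd.1), hd.2.2, fun y hy hycd ↦ ?_⟩
  obtain hyx | hxy := le_total y x
  · exact hycd.1.not_ge (le_csSup hbdd ⟨hy, hc.2.1.trans hycd.1.le, hyx⟩)
  · exact hycd.2.not_ge (csInf_le hbdd' ⟨hy, hxy, hycd.2.le.trans hd.2.2⟩)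

lemma recipExt_eq_of_mem_gap (hgap : ∀ w ∈ tsKappa T, w ∉ Ioo a b) (hx : x ∈ Ioo a b)
    (hy : y ∈ Ioo a b) : recipExt T p x = recipExt T p y := by
  refine recipExt_eq_of_gap (fun h ↦ hgap x h hx) (fun h ↦ hgap y h hy) fun w hw ↦
    ⟨fun hxw ↦ not_le.1 fun hwy ↦ ?_, fun hyw ↦ not_le.1 fun hwx ↦ ?_⟩
  · exact hgap w hw ⟨hx.1.trans hxw, hwy.trans_lt hy.2⟩
  · exact hgap w hw ⟨hy.1.trans hyw, hwx.trans_lt hx.2⟩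

lemma eq_zero_of_integral_const {k : ℂ} (hV : ∀ x ∈ Icc a b, V x = ∫ y in a..x, ψ y)
    (hb : V b = 0) (hψ : ∀ y ∈ Ioo a b, ψ y = k) (hx : x ∈ Ioo a b) : V x = 0 := by
  have hlin : ∀ y ∈ Ioc a b, V y = (y - a) * k := fun y hy ↦ by
    rw [hV y (Ioc_subset_Icc_self hy), intervalIntegral.integral_of_le hy.1.le,
      integral_Ioc_eq_integral_Ioo, setIntegral_congr_fun measurableSet_Ioo
        fun w hw ↦ hψ w ⟨hw.1, hw.2.trans_le hy.2⟩]
    simp [hy.1.le]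
  have hab : a < b := hx.1.trans hx.2
  have hk : k = 0 := by
    refine (mul_eq_zero.1 ((hlin b ⟨hab, le_rfl⟩).symm.trans hb)).resolve_left ?_
    rw [sub_eq_zero]
    exact_mod_cast hab.ne'
  rw [hlin x ⟨hx.1, hx.2.le⟩, hk, mul_zero]

lemma eq_zero_of_eq_zero_on_tsKappa (hT : IsClosed T) (hs : s ∈ tsKappa T) (ht : t ∈ tsKappa T)
    {C : ℂ} (hV : ∀ y ∈ Icc s t, ∀ x ∈ Icc s t, V x = V y + ∫ w in y..x, C * recipExt T p w)
    (hzero : ∀ y ∈ tsKappa T, y ∈ Icc s t → V y = 0) (hx : x ∈ Icc s t) : V x = 0 := by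
  by_cases hxK : x ∈ tsKappa T
  · exact hzero x hxK hx
  obtain ⟨c, hc, d, hd, hsc, hcx, hxd, hdt, hgap⟩ :=
    exists_gap_of_notMem (isClosed_tsKappa hT) hs ht hx hxK
  refine eq_zero_of_integral_const (a := c) (b := d) (ψ := fun w ↦ C * recipExt T p w)
    (k := C * recipExt T p x) (fun y hy ↦ ?_)
    (hzero d hd ⟨hx.1.trans hxd.le, hdt⟩)
    (fun y hy ↦ congrArg (C * ·) (recipExt_eq_of_mem_gap hgap hy ⟨hcx, hxd⟩)) ⟨hcx, hxd⟩
  have hcst : c ∈ Icc s t := ⟨hsc, hcx.le.trans hx.2⟩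
  rw [hV c hcst y ⟨hsc.trans hy.1, hy.2.trans hdt⟩, hzero c hc hcst, zero_add]

lemma ae_eq_zero_of_integral_eq_zero (hψ : LocallyIntegrable ψ volume)
    (hzero : ∀ x ∈ Icc s t, ∫ y in s..x, ψ y = 0) : ∀ᵐ x ∂volume.restrict (Ioo s t), ψ x = 0 := by
  filter_upwards [ae_restrict_of_ae (LocallyIntegrable.ae_hasDerivAt_integral hψ),
    ae_restrict_mem measurableSet_Ioo] with x hderiv hx
  refine (hderiv s).unique ((hasDerivAt_const x (0 : ℂ)).congr_of_eventuallyEq ?_)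
  filter_upwards [Icc_mem_nhds hx.1 hx.2] with y hy using hzero y hy

lemma eq_zero_of_primitive_recipExt (hT : IsClosed T) (hΦ : LocallyIntegrable (recipExt T p) volume)
    (hΦne : ∀ᵐ t ∂volume.restrict (tsSpan T), recipExt T p t ≠ 0)
    (hs : s ∈ tsKappa T) (ht : t ∈ tsKappa T) (hst : s < t) {C : ℂ}
    (hV : ∀ y ∈ Icc s t, ∀ x ∈ Icc s t, V x = V y + ∫ w in y..x, C * recipExt T p w)
    (hzero : ∀ y ∈ tsKappa T, y ∈ Icc s t → V y = 0) : C = 0 := by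
  have hVzero : ∀ x ∈ Icc s t, V x = 0 := fun x hx ↦
    eq_zero_of_eq_zero_on_tsKappa hT hs ht hV hzero hx
  have hs_mem : s ∈ Icc s t := ⟨le_rfl, hst.le⟩
  have hψ : ∀ᵐ x ∂volume.restrict (Ioo s t), C * recipExt T p x = 0 := by
    refine ae_eq_zero_of_integral_eq_zero (hΦ.smul C) fun x hx ↦ ?_
    simpa [hVzero x hx, hVzero s hs_mem] using (hV s hs_mem x hx).symm
  have hspan : Ioo s t ⊆ tsSpan T := fun x hx ↦
    ⟨⟨s, tsKappa_subset hs, hx.1⟩, t, tsKappa_subset ht, hx.2.le⟩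
  have : (ae (volume.restrict (Ioo s t))).NeBot := by
    rw [ae_neBot, Ne, Measure.restrict_eq_zero, Real.volume_Ioo, ENNReal.ofReal_eq_zero]
    linarith
  obtain ⟨x, hCx, hne⟩ := (hψ.and (ae_restrict_of_ae_restrict_of_subset hspan hΦne)).exists
  exact (mul_eq_zero.1 hCx).resolve_right hne

lemma determinesSolutions_of_mem_tsKappa (hT : IsClosed T)
    (hμ : IsForwardShiftMeasure (tsKappa T) μ) (hΦ : LocallyIntegrable (recipExt T p) volume)
    (hΦne : ∀ᵐ t ∂volume.restrict (tsSpan T), recipExt T p t ≠ 0) (hs : s ∈ tsKappa T)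
    (ht : t ∈ tsKappa T) (ht' : t' ∈ tsKappa T) (hst : s < t) (htt' : t < t')
    (hsab : s ∈ uIoo a b) (htab : t ∈ uIoo a b) (r q : ℝ → ℝ) (z : ℂ) :
    DeterminesSolutions μ (recipExt T p) r q z a b := by
  intro v v1 hv hzero
  have hvK : ∀ y ∈ tsKappa T, y ∈ Icc s t → v y = 0 := fun y hy hyst ↦
    hμ.eq_zero_of_ae_eq_zero hv.continuous hzero hy ht' (hsab.1.trans_le hyst.1)
      (hyst.2.trans_lt htab.2) (hyst.2.trans_lt htt')
  have hv1 : ∀ x ∈ uIcc a b, v1 x = v1 a := fun x hx ↦ by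
    rw [hv.isPrimitive_right a x, intervalIntegral.integral_zero_ae, add_zero]
    filter_upwards [hzero] with w hw hwm
    simp [hw (uIoc_subset_uIoc_of_mem_uIcc hx hwm)]
  have hprim : ∀ y ∈ uIcc a b, ∀ x ∈ uIcc a b,
      v x = v y + ∫ w in y..x, v1 a * recipExt T p w := fun y hy x hx ↦ by
    rw [hv.isPrimitive_left y x]
    congr 1
    refine intervalIntegral.integral_congr fun w hw ↦ ?_
    simp only [hv1 w (uIcc_subset_uIcc hy hx hw), mul_comm]
  have hsub : Icc s t ⊆ uIcc a b := Icc_subset_Icc hsab.1.le htab.2.le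
  have hC : v1 a = 0 := eq_zero_of_primitive_recipExt hT hΦ hΦne hs ht hst
    (fun y hy x hx ↦ hprim y (hsub hy) x (hsub hx)) hvK
  refine ⟨?_, (hv1 b right_mem_uIcc).trans hC⟩
  have hs_mem : s ∈ Icc s t := ⟨le_rfl, hst.le⟩
  rw [hprim s (hsub hs_mem) b right_mem_uIcc, hvK s hs hs_mem, hC]
  simp

end Nondegeneracy

section Translation

variable {T : Set ℝ} {μ : Measure ℝ} {p r q : ℝ → ℝ} {u u1 h : ℝ → ℂ}

lemma isPair_iff_isPrimitive : IsPair T μ (cR p) u u1 h ↔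
    IsPrimitive volume u (fun t ↦ recipExt T p t * u1 t) ∧ IsPrimitive μ u1 h := by
  have hdiv (t : ℝ) : u1 t / extK T (cR p) t = recipExt T p t * u1 t := by
    rw [recipExt, one_div, div_eq_inv_mul]
  simp only [IsPair, hdiv]
  refine ⟨fun hu ↦ ⟨.of_le fun c x hcx ↦ (hu c x hcx).1, .of_le fun c x hcx ↦ ?_⟩,
    fun hu c x hcx ↦ ⟨hu.1 c x, ?_⟩⟩
  · rw [intervalIntegral.integral_of_le hcx]
    exact (hu c x hcx).2
  · rw [← intervalIntegral.integral_of_le hcx]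
    exact hu.2 c x

lemma isSLSol_iff_isSolution [IsLocallyFiniteMeasure μ]
    (hΦ : LocallyIntegrable (recipExt T p) volume) (hr : LocallyIntegrable r μ)
    (hq : LocallyIntegrable q μ) (z : ℂ) :
    IsSLSol T μ (cR p) (cR r) (cR q) z 0 u u1 ↔ IsSolution μ (recipExt T p) r q z 0 u u1 := by
  rw [IsSLSol, isPair_iff_isPrimitive]
  refine ⟨fun hu ↦ ?_, fun hu ↦ ⟨hu.isPrimitive_left, hu.isPrimitive_right⟩⟩
  simpa [IsSolution] using IsRegularPair.of_isPrimitive_mul hΦ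
    (locallyIntegrable_sub_const_mul hr hq z) hu.1 (by simpa [cR] using hu.2)

lemma setLIntegral_sqWeight_lt_top_iff (hr : AEMeasurable r μ) (hu : AEStronglyMeasurable u μ)
    {s : Set ℝ} (hs : MeasurableSet s) : ∫⁻ t in s, sqWeight r u t ∂μ < ∞ ↔
      IntegrableOn (fun t ↦ ‖u t‖ ^ 2) s (weightedMeasure μ r) := by
  have hsq : AEStronglyMeasurable (fun t ↦ ‖u t‖ ^ 2) μ := hu.norm.pow 2
  have hlint : ∫⁻ t in s, ‖‖u t‖ ^ 2‖ₑ ∂weightedMeasure μ r = ∫⁻ t in s, sqWeight r u t ∂μ := by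
    rw [weightedMeasure, setLIntegral_withDensity_eq_lintegral_mul₀ hr.ennreal_ofReal
      hsq.enorm hs]
    refine lintegral_congr fun t ↦ ?_
    rw [Pi.mul_apply, enorm_pow, enorm_norm, mul_comm, sqWeight, enorm_eq_nnnorm]
  rw [IntegrableOn, Integrable, and_iff_right
    (hsq.mono_ac weightedMeasure_absolutelyContinuous).restrict, hasFiniteIntegral_iff_enorm, hlint]

lemma memL2T_iff_memLp (hT : IsClosed T) (hK : μ (tsKappa T)ᶜ = 0) (hr : AEMeasurable r μ)
    (hu : AEStronglyMeasurable u μ) : MemL2T T μ r u ↔ MemLp u 2 (weightedMeasure μ r) := by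
  have hmem : ∀ᵐ t ∂weightedMeasure μ r, t ∈ tsKappa T := weightedMeasure_absolutelyContinuous hK
  rw [MemL2T, setLIntegral_sqWeight_lt_top_iff hr hu (isClosed_tsKappa hT).measurableSet,
    IntegrableOn, Measure.restrict_eq_self_of_ae_mem hmem,
    memLp_two_iff_integrable_sq_norm (hu.mono_ac weightedMeasure_absolutelyContinuous)]

lemma aestronglyMeasurable_ellApply (hr : AEMeasurable r μ) (hq : AEMeasurable q μ)
    (hh : AEStronglyMeasurable h μ) (hu : AEStronglyMeasurable u μ) :
    AEStronglyMeasurable (ellApply r q h u) μ :=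
  ((hh.neg.add (hq.complex_ofReal.aestronglyMeasurable.mul hu)).aemeasurable.div
    hr.complex_ofReal).aestronglyMeasurable

theorem memD2_iff_memMaxDomain [IsLocallyFiniteMeasure μ] (hT : IsClosed T)
    (hK : μ (tsKappa T)ᶜ = 0) (hΦ : LocallyIntegrable (recipExt T p) volume)
    (hr : AEMeasurable r μ) (hq : AEMeasurable q μ) :
    MemD2 T μ p r q u u1 h ↔ MemMaxDomain μ (recipExt T p) r q u u1 h := by
  have hL2 (hreg : IsRegularPair μ (recipExt T p) u u1 h) :
      MemL2T T μ r u ∧ MemL2T T μ r (ellApply r q h u) ↔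
        MemLp u 2 (weightedMeasure μ r) ∧ MemLp (ellApply r q h u) 2 (weightedMeasure μ r) := by
    have hu := hreg.continuous.aestronglyMeasurable (μ := μ)
    exact and_congr (memL2T_iff_memLp hT hK hr hu) (memL2T_iff_memLp hT hK hr
      (aestronglyMeasurable_ellApply hr hq hreg.locallyIntegrable_density.aestronglyMeasurable hu))
  constructor
  · rintro ⟨hh, hpair, hmem⟩
    rw [isPair_iff_isPrimitive] at hpair
    have hreg : IsRegularPair μ (recipExt T p) u u1 h := .of_locallyIntegrable hΦ hh hpair.1 hpair.2
    exact ⟨hreg, ((hL2 hreg).1 hmem).1, ((hL2 hreg).1 hmem).2⟩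
  · rintro ⟨hreg, hu, hell⟩
    exact ⟨hreg.locallyIntegrable_density,
      isPair_iff_isPrimitive.2 ⟨hreg.isPrimitive_left, hreg.isPrimitive_right⟩,
      (hL2 hreg).2 ⟨hu, hell⟩⟩

lemma integrableOn_of_inter_subset_union {E : Type*} [NormedAddCommGroup E] {m : Measure ℝ}
    {F : ℝ → E} {K S R C : Set ℝ} (hF : LocallyIntegrable F m) (hK : m Kᶜ = 0)
    (hR : IntegrableOn F R m) (hC : IsCompact C) (hS : S ∩ K ⊆ R ∪ C) : IntegrableOn F S m :=
  ((hR.union (hF.integrableOn_isCompact hC)).union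
    (IntegrableOn.of_measure_zero hK)).mono_set fun t ht ↦
      (em (t ∈ K)).imp (fun htK ↦ hS ⟨ht, htK⟩) id

lemma squareIntegrableAt_atBot_iff {m : Measure ℝ} [IsLocallyFiniteMeasure m] (hu : Continuous u)
    (c : ℝ) : SquareIntegrableAt m atBot u ↔ IntegrableOn (fun t ↦ ‖u t‖ ^ 2) (Iic c) m :=
  (integrableOn_Iic_iff_integrableAtFilter_atBot.trans (and_iff_left
    ((hu.norm.pow 2).locallyIntegrable.locallyIntegrableOn _))).symm

lemma squareIntegrableAt_atTop_iff {m : Measure ℝ} [IsLocallyFiniteMeasure m] (hu : Continuous u)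
    (c : ℝ) : SquareIntegrableAt m atTop u ↔ IntegrableOn (fun t ↦ ‖u t‖ ^ 2) (Ici c) m :=
  (integrableOn_Ici_iff_integrableAtFilter_atTop.trans (and_iff_left
    ((hu.norm.pow 2).locallyIntegrable.locallyIntegrableOn _))).symm

variable {m : Measure ℝ} [IsLocallyFiniteMeasure m]

lemma squareIntegrableAt_atBot_of_bddBelow (hT : BddBelow T) (hK : m (tsKappa T)ᶜ = 0)
    (hu : Continuous u) : SquareIntegrableAt m atBot u := by
  obtain ⟨a, ha⟩ := hT
  refine (squareIntegrableAt_atBot_iff hu 0).2 (integrableOn_of_inter_subset_union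
    (hu.norm.pow 2).locallyIntegrable hK integrableOn_empty (isCompact_Icc (a := a) (b := 0)) ?_)
  exact fun t ht ↦ .inr ⟨ha (tsKappa_subset ht.2), ht.1⟩

lemma squareIntegrableAt_atTop_of_bddAbove (hT : BddAbove T) (hK : m (tsKappa T)ᶜ = 0)
    (hu : Continuous u) : SquareIntegrableAt m atTop u := by
  obtain ⟨b, hb⟩ := hT
  refine (squareIntegrableAt_atTop_iff hu 0).2 (integrableOn_of_inter_subset_union
    (hu.norm.pow 2).locallyIntegrable hK integrableOn_empty (isCompact_Icc (a := 0) (b := b)) ?_)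
  exact fun t ht ↦ .inr ⟨ht.1, hb (tsKappa_subset ht.2)⟩

variable [IsLocallyFiniteMeasure μ]

theorem l2NearLeft_iff_squareIntegrableAt (hT : IsClosed T) (hK : μ (tsKappa T)ᶜ = 0)
    (hne : (tsKappa T).Nonempty) (hr : LocallyIntegrable r μ) (hu : Continuous u) :
    L2NearLeft T μ r u ↔ SquareIntegrableAt (weightedMeasure μ r) atBot u := by
  have := isLocallyFiniteMeasure_weightedMeasure hr
  have hmeas (c : ℝ) : MeasurableSet ({t | (∃ s ∈ T, s < t) ∧ t ≤ c} ∩ tsKappa T) := by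
    refine OrdConnected.measurableSet ⟨?_⟩ |>.inter (isClosed_tsKappa hT).measurableSet
    rintro x ⟨⟨s, hs, hsx⟩, -⟩ y ⟨-, hyc⟩ w hw
    exact ⟨⟨s, hs, hsx.trans_le hw.1⟩, hw.2.trans hyc⟩
  unfold L2NearLeft
  simp only [setLIntegral_sqWeight_lt_top_iff hr.aestronglyMeasurable.aemeasurable
    hu.aestronglyMeasurable (hmeas _)]
  refine ⟨fun h ↦ ?_, fun h c _ ↦ ((squareIntegrableAt_atBot_iff hu c).1 h).mono_set
    fun t ht ↦ ht.1.2⟩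
  obtain ⟨c, hc⟩ := hne
  refine (squareIntegrableAt_atBot_iff hu c).2 (integrableOn_of_inter_subset_union
    (hu.norm.pow 2).locallyIntegrable (weightedMeasure_absolutelyContinuous hK) (h c hc)
    (isCompact_singleton (x := sInf T)) fun t ⟨htc, htK⟩ ↦ ?_)
  by_cases hs : ∃ s ∈ T, s < t
  · exact .inl ⟨⟨hs, htc⟩, htK⟩
  · push Not at hs
    exact .inr (show IsLeast T t from ⟨tsKappa_subset htK, hs⟩).csInf_eq.symm

theorem l2NearRight_iff_squareIntegrableAt (hT : IsClosed T) (hK : μ (tsKappa T)ᶜ = 0)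
    (hne : (tsKappa T).Nonempty) (hr : LocallyIntegrable r μ) (hu : Continuous u) :
    L2NearRight T μ r u ↔ SquareIntegrableAt (weightedMeasure μ r) atTop u := by
  have := isLocallyFiniteMeasure_weightedMeasure hr
  have hmeas (c : ℝ) : MeasurableSet ({t | c ≤ t ∧ ∃ s ∈ T, t < s} ∩ tsKappa T) := by
    refine OrdConnected.measurableSet ⟨?_⟩ |>.inter (isClosed_tsKappa hT).measurableSet
    rintro x ⟨hcx, -⟩ y ⟨-, s, hs, hys⟩ w hw
    exact ⟨hcx.trans hw.1, s, hs, hw.2.trans_lt hys⟩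
  unfold L2NearRight
  simp only [setLIntegral_sqWeight_lt_top_iff hr.aestronglyMeasurable.aemeasurable
    hu.aestronglyMeasurable (hmeas _)]
  refine ⟨fun h ↦ ?_, fun h c _ ↦ ((squareIntegrableAt_atTop_iff hu c).1 h).mono_set
    fun t ht ↦ ht.1.1⟩
  obtain ⟨c, hc⟩ := hne
  refine (squareIntegrableAt_atTop_iff hu c).2 (integrableOn_of_inter_subset_union
    (hu.norm.pow 2).locallyIntegrable (weightedMeasure_absolutelyContinuous hK) (h c hc)
    (isCompact_singleton (x := sSup T)) fun t ⟨hct, htK⟩ ↦ ?_)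
  by_cases hs : ∃ s ∈ T, t < s
  · exact .inl ⟨⟨hct, hs⟩, htK⟩
  · push Not at hs
    exact .inr (show IsGreatest T t from ⟨tsKappa_subset htK, hs⟩).csSup_eq.symm

end Translation

section Endpoints

variable {T : Set ℝ} {μ : Measure ℝ} {p r q : ℝ → ℝ}

lemma tsKappa_nonempty (hT : T.Nontrivial) : (tsKappa T).Nonempty :=
  let ⟨_, hx, y, hy, hxy⟩ := hT.exists_lt
  ⟨y, mem_tsKappa_of_lt hy hx hxy⟩

lemma leftLimFilter_neBot (hT : IsClosed T) (hne : T.Nonempty) : (leftLimFilter T).NeBot := by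
  unfold leftLimFilter
  split_ifs with h
  · exact mem_closure_iff_nhdsWithin_neBot.1 (subset_closure (hT.csInf_mem hne h))
  · refine inf_principal_neBot_iff.2 fun U hU ↦ ?_
    obtain ⟨a, ha⟩ := mem_atBot_sets.1 hU
    obtain ⟨x, hx, hxa⟩ := not_bddBelow_iff.1 h a
    exact ⟨x, ha x hxa.le, hx⟩

lemma rightLimFilter_neBot (hT : IsClosed T) (hne : T.Nonempty) : (rightLimFilter T).NeBot := by
  unfold rightLimFilter
  split_ifs with h
  · exact mem_closure_iff_nhdsWithin_neBot.1 (subset_closure (hT.csSup_mem hne h))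
  · refine inf_principal_neBot_iff.2 fun U hU ↦ ?_
    obtain ⟨b, hb⟩ := mem_atTop_sets.1 hU
    obtain ⟨x, hx, hbx⟩ := not_bddAbove_iff.1 h b
    exact ⟨x, hb x hbx.le, hx⟩

lemma eventually_tsSigma_le {x α : ℝ} (hx : x ∈ T) (hα : α ∈ T) (hxα : x < α) :
    ∀ᶠ y in leftLimFilter T, tsSigma T y ≤ α := by
  suffices ∀ᶠ y in leftLimFilter T, y < α from this.mono fun y hy ↦ tsSigma_le hα hy
  unfold leftLimFilter
  split_ifs with hb
  · exact mem_nhdsWithin_of_mem_nhds (Iio_mem_nhds ((csInf_le hb hx).trans_lt hxα))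
  · exact mem_inf_of_left (Iio_mem_atBot α)

lemma eventually_le_tsSigma {x α : ℝ} (hx : x ∈ T) (hαx : α < x) :
    ∀ᶠ y in rightLimFilter T, α ≤ tsSigma T y := by
  suffices ∀ᶠ y in rightLimFilter T, α < y ∧ y ∈ T from
    this.mono fun y hy ↦ hy.1.le.trans (le_tsSigma_of_mem hy.2)
  unfold rightLimFilter
  split_ifs with hb
  · exact inter_mem (mem_nhdsWithin_of_mem_nhds (Ioi_mem_nhds (hαx.trans_le (le_csSup hb hx))))
      self_mem_nhdsWithin
  · exact inter_mem (mem_inf_of_left (Ioi_mem_atTop α)) (mem_inf_of_right (mem_principal_self T))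

lemma tendsto_tsSigma_leftLimFilter_atBot (hb : ¬ BddBelow T) :
    Tendsto (tsSigma T) (leftLimFilter T) atBot := by
  refine tendsto_atBot.2 fun b ↦ ?_
  obtain ⟨s, hs, hsb⟩ := not_bddBelow_iff.1 hb b
  obtain ⟨t, ht, hts⟩ := not_bddBelow_iff.1 hb s
  exact (eventually_tsSigma_le ht hs hts).mono fun y hy ↦ hy.trans hsb.le

lemma tendsto_tsSigma_rightLimFilter_atTop (hb : ¬ BddAbove T) :
    Tendsto (tsSigma T) (rightLimFilter T) atTop := by
  refine tendsto_atTop.2 fun b ↦ ?_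
  obtain ⟨s, hs, hbs⟩ := not_bddAbove_iff.1 hb b
  exact eventually_le_tsSigma hs hbs

variable [IsLocallyFiniteMeasure μ] {z : ℂ} {u u1 : ℝ → ℂ}

lemma memMaxDomain_of_squareIntegrableAt (hr : LocallyIntegrable r μ) (hrpos : ∀ᵐ t ∂μ, 0 < r t)
    {Φ : ℝ → ℂ} (hu : IsSolution μ Φ r q z 0 u u1)
    (hbot : SquareIntegrableAt (weightedMeasure μ r) atBot u)
    (htop : SquareIntegrableAt (weightedMeasure μ r) atTop u) :
    ∃ h, MemMaxDomain μ Φ r q u u1 h :=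
  have := isLocallyFiniteMeasure_weightedMeasure hr
  ⟨_, .of_isSolution hrpos MemLp.zero hu
    (memLp_two_of_squareIntegrableAt (IsRegularPair.continuous hu) hbot htop)⟩

lemma exists_memMaxDomain_eventuallyEq_left (hT : IsClosed T) (hne : T.Nonempty)
    (hμ : IsForwardShiftMeasure (tsKappa T) μ) (hΦ : LocallyIntegrable (recipExt T p) volume)
    (hΦne : ∀ᵐ t ∂volume.restrict (tsSpan T), recipExt T p t ≠ 0)
    (hr : LocallyIntegrable r μ) (hrpos : ∀ᵐ t ∂μ, 0 < r t) (hq : LocallyIntegrable q μ)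
    (hu : IsSolution μ (recipExt T p) r q z 0 u u1)
    (hu_bot : SquareIntegrableAt (weightedMeasure μ r) atBot u) :
    ∃ f f1, (∃ h, MemMaxDomain μ (recipExt T p) r q f f1 h) ∧
      ∀ᶠ x in map (tsSigma T) (leftLimFilter T), f x = u x ∧ f1 x = u1 x := by
  have := isLocallyFiniteMeasure_weightedMeasure hr
  have hK : weightedMeasure μ r (tsKappa T)ᶜ = 0 :=
    weightedMeasure_absolutelyContinuous (hμ.measure_compl_eq_zero (isClosed_tsKappa hT))
  by_cases hb : BddAbove T
  · exact ⟨u, u1, memMaxDomain_of_squareIntegrableAt hr hrpos hu hu_bot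
      (squareIntegrableAt_atTop_of_bddAbove hb hK (IsRegularPair.continuous hu)),
      .of_forall fun _ ↦ ⟨rfl, rfl⟩⟩
  rw [not_bddAbove_iff] at hb
  obtain ⟨x, hx⟩ := hne
  obtain ⟨α, hα, hxα⟩ := hb x
  obtain ⟨s, hs, hαs⟩ := hb α
  obtain ⟨t, ht, hst⟩ := hb s
  obtain ⟨t', ht', htt'⟩ := hb t
  have hab : α ≤ t + 1 := by linarith
  have hdet : DeterminesSolutions μ (recipExt T p) r q z α (t + 1) := by
    refine determinesSolutions_of_mem_tsKappa hT hμ hΦ hΦne (mem_tsKappa_of_lt hs hα hαs)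
      (mem_tsKappa_of_lt ht hs hst) (mem_tsKappa_of_lt ht' ht htt') hst htt' ?_ ?_ r q z <;>
    rw [uIoo_of_le hab] <;> constructor <;> linarith
  obtain ⟨f, f1, hf, hfu⟩ := exists_memMaxDomain_eq_of_le hΦ hr hrpos hq hdet hab hu hu_bot
  exact ⟨f, f1, hf, eventually_map.2 ((eventually_tsSigma_le hx hα hxα).mono fun y ↦ hfu _)⟩

lemma exists_memMaxDomain_eventuallyEq_right (hT : IsClosed T) (hne : T.Nonempty)
    (hμ : IsForwardShiftMeasure (tsKappa T) μ) (hΦ : LocallyIntegrable (recipExt T p) volume)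
    (hΦne : ∀ᵐ t ∂volume.restrict (tsSpan T), recipExt T p t ≠ 0)
    (hr : LocallyIntegrable r μ) (hrpos : ∀ᵐ t ∂μ, 0 < r t) (hq : LocallyIntegrable q μ)
    (hu : IsSolution μ (recipExt T p) r q z 0 u u1)
    (hu_top : SquareIntegrableAt (weightedMeasure μ r) atTop u) :
    ∃ f f1, (∃ h, MemMaxDomain μ (recipExt T p) r q f f1 h) ∧
      ∀ᶠ x in map (tsSigma T) (rightLimFilter T), f x = u x ∧ f1 x = u1 x := by
  have := isLocallyFiniteMeasure_weightedMeasure hr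
  have hK : weightedMeasure μ r (tsKappa T)ᶜ = 0 :=
    weightedMeasure_absolutelyContinuous (hμ.measure_compl_eq_zero (isClosed_tsKappa hT))
  by_cases hb : BddBelow T
  · exact ⟨u, u1, memMaxDomain_of_squareIntegrableAt hr hrpos hu
      (squareIntegrableAt_atBot_of_bddBelow hb hK (IsRegularPair.continuous hu)) hu_top,
      .of_forall fun _ ↦ ⟨rfl, rfl⟩⟩
  rw [not_bddBelow_iff] at hb
  obtain ⟨x, hx⟩ := hne
  obtain ⟨α, hα, hαx⟩ := hb x
  obtain ⟨t, ht, htα⟩ := hb α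
  obtain ⟨s, hs, hst⟩ := hb t
  obtain ⟨s', hs', hss⟩ := hb s
  have hab : s - 1 ≤ α := by linarith
  have hdet : DeterminesSolutions μ (recipExt T p) r q z α (s - 1) := by
    refine determinesSolutions_of_mem_tsKappa hT hμ hΦ hΦne (mem_tsKappa_of_lt hs hs' hss)
      (mem_tsKappa_of_lt ht hs hst) (mem_tsKappa_of_lt hα ht htα) hst htα ?_ ?_ r q z <;>
    rw [uIoo_of_ge hab] <;> constructor <;> linarith
  obtain ⟨f, f1, hf, hfu⟩ := exists_memMaxDomain_eq_of_ge hΦ hr hrpos hq hdet hab hu hu_top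
  exact ⟨f, f1, hf, eventually_map.2 ((eventually_le_tsSigma hx hαx).mono fun y ↦ hfu _)⟩

theorem isBoundaryFilter_left (hT : IsClosed T) (hne : T.Nonempty)
    (hμ : IsForwardShiftMeasure (tsKappa T) μ) (hΦ : LocallyIntegrable (recipExt T p) volume)
    (hΦne : ∀ᵐ t ∂volume.restrict (tsSpan T), recipExt T p t ≠ 0)
    (hr : LocallyIntegrable r μ) (hrpos : ∀ᵐ t ∂μ, 0 < r t) (hq : LocallyIntegrable q μ) :
    IsBoundaryFilter μ (recipExt T p) r q atBot (map (tsSigma T) (leftLimFilter T)) where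
  eq_atBot_or_eq_atTop := .inl rfl
  neBot := (leftLimFilter_neBot hT hne).map _
  squareIntegrableAt_or_le := by
    have := isLocallyFiniteMeasure_weightedMeasure hr
    have hK : weightedMeasure μ r (tsKappa T)ᶜ = 0 :=
      weightedMeasure_absolutelyContinuous (hμ.measure_compl_eq_zero (isClosed_tsKappa hT))
    exact (em (BddBelow T)).imp (fun hb _ ↦ squareIntegrableAt_atBot_of_bddBelow hb hK)
      tendsto_tsSigma_leftLimFilter_atBot
  exists_memMaxDomain _ _ _ :=
    exists_memMaxDomain_eventuallyEq_left hT hne hμ hΦ hΦne hr hrpos hq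

theorem isBoundaryFilter_right (hT : IsClosed T) (hne : T.Nonempty)
    (hμ : IsForwardShiftMeasure (tsKappa T) μ) (hΦ : LocallyIntegrable (recipExt T p) volume)
    (hΦne : ∀ᵐ t ∂volume.restrict (tsSpan T), recipExt T p t ≠ 0)
    (hr : LocallyIntegrable r μ) (hrpos : ∀ᵐ t ∂μ, 0 < r t) (hq : LocallyIntegrable q μ) :
    IsBoundaryFilter μ (recipExt T p) r q atTop (map (tsSigma T) (rightLimFilter T)) where
  eq_atBot_or_eq_atTop := .inr rfl
  neBot := (rightLimFilter_neBot hT hne).map _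
  squareIntegrableAt_or_le := by
    have := isLocallyFiniteMeasure_weightedMeasure hr
    have hK : weightedMeasure μ r (tsKappa T)ᶜ = 0 :=
      weightedMeasure_absolutelyContinuous (hμ.measure_compl_eq_zero (isClosed_tsKappa hT))
    exact (em (BddAbove T)).imp (fun hb _ ↦ squareIntegrableAt_atTop_of_bddAbove hb hK)
      tendsto_tsSigma_rightLimFilter_atTop
  exists_memMaxDomain _ _ _ :=
    exists_memMaxDomain_eventuallyEq_right hT hne hμ hΦ hΦne hr hrpos hq

lemma limitPointLeft_iff (hT : IsClosed T) (hK : μ (tsKappa T)ᶜ = 0)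
    (hne : (tsKappa T).Nonempty) (hΦ : LocallyIntegrable (recipExt T p) volume)
    (hr : LocallyIntegrable r μ) (hq : LocallyIntegrable q μ) :
    LimitPointLeft T μ p r q ↔ ∀ z, ∃ u u1, IsSolution μ (recipExt T p) r q z 0 u u1 ∧
      ¬ SquareIntegrableAt (weightedMeasure μ r) atBot u := by
  simp only [LimitPointLeft, isSLSol_iff_isSolution hΦ hr hq]
  exact forall_congr' fun z ↦ exists₂_congr fun u u1 ↦ and_congr_right fun hu ↦ not_congr <|
    l2NearLeft_iff_squareIntegrableAt hT hK hne hr (IsRegularPair.continuous hu)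

lemma limitCircleLeft_iff (hT : IsClosed T) (hK : μ (tsKappa T)ᶜ = 0)
    (hne : (tsKappa T).Nonempty) (hΦ : LocallyIntegrable (recipExt T p) volume)
    (hr : LocallyIntegrable r μ) (hq : LocallyIntegrable q μ) :
    LimitCircleLeft T μ p r q ↔ ∀ z u u1, IsSolution μ (recipExt T p) r q z 0 u u1 →
      SquareIntegrableAt (weightedMeasure μ r) atBot u := by
  simp only [LimitCircleLeft, isSLSol_iff_isSolution hΦ hr hq]
  exact forall₄_congr fun z u u1 hu ↦
    l2NearLeft_iff_squareIntegrableAt hT hK hne hr (IsRegularPair.continuous hu)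

lemma limitPointRight_iff (hT : IsClosed T) (hK : μ (tsKappa T)ᶜ = 0)
    (hne : (tsKappa T).Nonempty) (hΦ : LocallyIntegrable (recipExt T p) volume)
    (hr : LocallyIntegrable r μ) (hq : LocallyIntegrable q μ) :
    LimitPointRight T μ p r q ↔ ∀ z, ∃ u u1, IsSolution μ (recipExt T p) r q z 0 u u1 ∧
      ¬ SquareIntegrableAt (weightedMeasure μ r) atTop u := by
  simp only [LimitPointRight, isSLSol_iff_isSolution hΦ hr hq]
  exact forall_congr' fun z ↦ exists₂_congr fun u u1 ↦ and_congr_right fun hu ↦ not_congr <|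
    l2NearRight_iff_squareIntegrableAt hT hK hne hr (IsRegularPair.continuous hu)

lemma limitCircleRight_iff (hT : IsClosed T) (hK : μ (tsKappa T)ᶜ = 0)
    (hne : (tsKappa T).Nonempty) (hΦ : LocallyIntegrable (recipExt T p) volume)
    (hr : LocallyIntegrable r μ) (hq : LocallyIntegrable q μ) :
    LimitCircleRight T μ p r q ↔ ∀ z u u1, IsSolution μ (recipExt T p) r q z 0 u u1 →
      SquareIntegrableAt (weightedMeasure μ r) atTop u := by
  simp only [LimitCircleRight, isSLSol_iff_isSolution hΦ hr hq]
  exact forall₄_congr fun z u u1 hu ↦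
    l2NearRight_iff_squareIntegrableAt hT hK hne hr (IsRegularPair.continuous hu)

end Endpoints

/-- Characterization of the limit-point and limit-circle cases via the Wronskian:
`ℓ` is l.p. at `a` iff `W(f,g)(a) = 0` for all `f, g ∈ D_ℓ²`, and `ℓ` is l.c. at `a` iff
there is `f ∈ D_ℓ²` with `W(f, f*)(a) = 0` and `W(f,g)(a) ≠ 0` for some `g ∈ D_ℓ²`;
analogously at `b`. -/
theorem limit_point_circle_iff_wronskian
    (T : Set ℝ) (hne : T.Nonempty) (hcl : IsClosed T)
    (hfive : ∃ s : Finset ℝ, ↑s ⊆ T ∧ 5 ≤ s.card)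
    (μ ν : Measure ℝ)
    (hμ : ∀ c d : ℝ, c ≤ d →
      μ (Set.Ioc c d) = ENNReal.ofReal (tsSigma (tsKappa T) d - tsSigma (tsKappa T) c))
    (hν : ∀ c d : ℝ, c ≤ d → ν (Set.Ico c d) = ENNReal.ofReal (tsRho T d - tsRho T c))
    (p r q : ℝ → ℝ)
    (hr : LocallyIntegrable r μ) (hrpos : ∀ᵐ t ∂μ, 0 < r t)
    (hq : LocallyIntegrable q μ)
    (hpne : ∀ᵐ t ∂ν, p t ≠ 0) (hp : LocallyIntegrable (fun t => 1 / p t) ν)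
    :
    (LimitPointLeft T μ p r q ↔
      ∀ f f1 g g1 : ℝ → ℂ, (∃ h : ℝ → ℂ, MemD2 T μ p r q f f1 h) →
        (∃ h : ℝ → ℂ, MemD2 T μ p r q g g1 h) →
        Filter.Tendsto (fun x => Wr f f1 g g1 (tsSigma T x)) (leftLimFilter T) (nhds 0)) ∧
    (LimitCircleLeft T μ p r q ↔
      ∃ f f1 : ℝ → ℂ, (∃ h : ℝ → ℂ, MemD2 T μ p r q f f1 h) ∧
        Filter.Tendsto (fun x => Wr f f1 (fun t => starRingEnd ℂ (f t))
          (fun t => starRingEnd ℂ (f1 t)) (tsSigma T x)) (leftLimFilter T) (nhds 0) ∧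
        ∃ g g1 : ℝ → ℂ, (∃ h : ℝ → ℂ, MemD2 T μ p r q g g1 h) ∧
          ∃ w : ℂ, w ≠ 0 ∧
            Filter.Tendsto (fun x => Wr f f1 g g1 (tsSigma T x)) (leftLimFilter T) (nhds w)) ∧
    (LimitPointRight T μ p r q ↔
      ∀ f f1 g g1 : ℝ → ℂ, (∃ h : ℝ → ℂ, MemD2 T μ p r q f f1 h) →
        (∃ h : ℝ → ℂ, MemD2 T μ p r q g g1 h) →
        Filter.Tendsto (fun x => Wr f f1 g g1 (tsSigma T x)) (rightLimFilter T) (nhds 0)) ∧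
    (LimitCircleRight T μ p r q ↔
      ∃ f f1 : ℝ → ℂ, (∃ h : ℝ → ℂ, MemD2 T μ p r q f f1 h) ∧
        Filter.Tendsto (fun x => Wr f f1 (fun t => starRingEnd ℂ (f t))
          (fun t => starRingEnd ℂ (f1 t)) (tsSigma T x)) (rightLimFilter T) (nhds 0) ∧
        ∃ g g1 : ℝ → ℂ, (∃ h : ℝ → ℂ, MemD2 T μ p r q g g1 h) ∧
          ∃ w : ℂ, w ≠ 0 ∧
            Filter.Tendsto (fun x => Wr f f1 g g1 (tsSigma T x)) (rightLimFilter T) (nhds w)) := by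
  have hμσ : IsForwardShiftMeasure (tsKappa T) μ := hμ
  have := hμσ.isLocallyFiniteMeasure
  have hK := hμσ.measure_compl_eq_zero (isClosed_tsKappa hcl)
  have hΦ : LocallyIntegrable (recipExt T p) volume := locallyIntegrable_recipExt hcl hν hp
  have hΦne : ∀ᵐ t ∂volume.restrict (tsSpan T), recipExt T p t ≠ 0 :=
    ae_recipExt_ne_zero hcl hν hpne
  obtain ⟨s, hsT, hs⟩ := hfive
  have hKne : (tsKappa T).Nonempty := tsKappa_nonempty <|
    (Finset.one_lt_card_iff_nontrivial.1 (by omega : 1 < s.card)).mono hsT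
  have hleft := isBoundaryFilter_left hcl hne hμσ hΦ hΦne hr hrpos hq
  have hright := isBoundaryFilter_right hcl hne hμσ hΦ hΦne hr hrpos hq
  have hreal := conj_recipExt T p
  simp only [memD2_iff_memMaxDomain hcl hK hΦ hr.aestronglyMeasurable.aemeasurable
    hq.aestronglyMeasurable.aemeasurable]
  exact ⟨(limitPointLeft_iff hcl hK hKne hΦ hr hq).trans (hleft.limitPoint_iff hΦ hr hrpos hq),
    (limitCircleLeft_iff hcl hK hKne hΦ hr hq).trans (hleft.limitCircle_iff hΦ hreal hr hrpos hq),
    (limitPointRight_iff hcl hK hKne hΦ hr hq).trans (hright.limitPoint_iff hΦ hr hrpos hq),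
    (limitCircleRight_iff hcl hK hKne hΦ hr hq).trans
      (hright.limitCircle_iff hΦ hreal hr hrpos hq)⟩
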